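/- For each 0 < ε₁, ε₂ < 1 the following holds for all sufficiently large K. For d > 0, let G be an n-vertex bipartite (ε₁, ε₂·d)-expander with minimum degree δ(G) ≥ d and n ≥ K·d, and set m := ⌊log⁴(n/d)⌋. Suppose d ≥ m^{200} and G contains no copy of TK_{√d·m}^(1). Then for every W ⊆ V(G) with |W| ≤ d·m^{11}, there exists a (50m, 1)-adjuster P = (u₁, u₂, F₁, F₂, 3, A, 𝒫) in G − W; moreover, |A| ≤ 2·ℓ(P). -/

import Mathlib

open scoped BigOperators

/-- The average degree of a graph `G`: `(1/|G|) * sum of degrees`. -/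
noncomputable def avgDeg {V : Type*} (G : SimpleGraph V) : Real :=
  (finsum fun v : V => ((G.neighborSet v).ncard : Real)) / (Nat.card V : Real)

/-- The function `eps(x, eps1, k)` from the definition of robust sublinear expanders. -/
noncomputable def epsFun (eps1 k x : Real) : Real :=
  if x < k / 5 then 0 else eps1 / (Real.log (15 * x / k)) ^ 2

/-- The external neighbourhood of a vertex set `X` in a graph `H`. -/
def extNbr {V : Type*} (H : SimpleGraph V) (X : Set V) : Set V :=
  {w : V | w ∉ X ∧ ∃ v ∈ X, H.Adj v w}

/-- `G` is an `(eps1, k)`-robust-expander. -/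
def IsExpander {V : Type*} (G : SimpleGraph V) (eps1 k : Real) : Prop :=
  ∀ X : Set V, k / 2 ≤ (X.ncard : Real) → (X.ncard : Real) ≤ (Nat.card V : Real) / 2 →
    ∀ F : SimpleGraph V, F ≤ G →
      (F.edgeSet.ncard : Real) ≤ avgDeg G * epsFun eps1 k (X.ncard) * (X.ncard : Real) →
      epsFun eps1 k (X.ncard) * (X.ncard : Real) ≤ ((extNbr (G \ F) X).ncard : Real)

/-- The minimum degree of `G` is at least `d`. -/
def minDegGe {V : Type*} (G : SimpleGraph V) (d : Real) : Prop :=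
  ∀ v : V, d ≤ ((G.neighborSet v).ncard : Real)

/-- `G` is bipartite with parts `A` and its complement. -/
def IsBipartiteWith {V : Type*} (G : SimpleGraph V) (A : Set V) : Prop :=
  ∀ ⦃v w : V⦄, G.Adj v w → (v ∈ A ↔ w ∉ A)

/-- `G` is bipartite. -/
def IsBipartite {V : Type*} (G : SimpleGraph V) : Prop :=
  ∃ A : Set V, IsBipartiteWith G A

/-- `S` is the vertex set of a copy of `TK_t^(l)` in `G`: a balanced subdivision of the
complete graph `K_t` in which each edge is replaced by a path with `l` internal vertices
(i.e. of length `l + 1`); the paths are pairwise internally vertex disjoint. -/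
def IsTK {V : Type*} (G : SimpleGraph V) (t l : Nat) (S : Set V) : Prop :=
  ∃ b : Fin t → V, Function.Injective b ∧
    ∃ P : ∀ i j : Fin t, i < j → G.Walk (b i) (b j),
      (∀ i j (h : i < j), (P i j h).IsPath) ∧
      (∀ i j (h : i < j), (P i j h).length = l + 1) ∧
      (∀ i j (h : i < j), ∀ i' j' (h' : i' < j'), (i, j) ≠ (i', j') →
        ∀ v : V, v ∈ (P i j h).support → v ∈ (P i' j' h').support →
          (v = b i ∨ v = b j) ∧ (v = b i' ∨ v = b j')) ∧
      S = {v : V | ∃ (i j : Fin t) (h : i < j), v ∈ (P i j h).support}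

/-- `G` contains a copy of `TK_t^(l)`. -/
def HasTK {V : Type*} (G : SimpleGraph V) (t l : Nat) : Prop :=
  ∃ S : Set V, IsTK G t l S

/-- An `(h₀, h₁, L)`-unit in `G`: a core vertex, `h₀` pairwise vertex disjoint `h₁`-stars
with centres `centre i` and leaves `leaf i j`, together with core-centre paths, pairwise
internally vertex disjoint and disjoint from the stars, all of the same length `< L`. -/
structure UnitIn {V : Type*} (G : SimpleGraph V) (h₀ h₁ L : Nat) where
  core : V
  centre : Fin h₀ → V
  leaf : Fin h₀ → Fin h₁ → V
  path : ∀ i : Fin h₀, G.Walk core (centre i)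
  pathLen : Nat
  pathLen_pos : 0 < pathLen
  pathLen_lt : pathLen < L
  path_isPath : ∀ i, (path i).IsPath
  path_length : ∀ i, (path i).length = pathLen
  star_adj : ∀ i j, G.Adj (centre i) (leaf i j)
  centre_inj : Function.Injective centre
  leaf_inj : Function.Injective fun p : Fin h₀ × Fin h₁ => leaf p.1 p.2
  centre_ne_leaf : ∀ i j k, centre i ≠ leaf j k
  paths_disjoint : ∀ i j, i ≠ j →
    ∀ x : V, x ∈ (path i).support → x ∈ (path j).support → x = core
  leaf_notin_path : ∀ i j k, leaf j k ∉ (path i).support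

namespace UnitIn

variable {V : Type*} {G : SimpleGraph V} {h₀ h₁ L : Nat}

/-- The interior of a unit: the union of the vertex sets of its core-centre paths. -/
def interior (U : UnitIn G h₀ h₁ L) : Set V :=
  {x : V | ∃ i, x ∈ (U.path i).support}

/-- The vertex set of a unit. -/
def verts (U : UnitIn G h₀ h₁ L) : Set V :=
  U.interior ∪ Set.range fun p : Fin h₀ × Fin h₁ => U.leaf p.1 p.2

/-- The boundary of a unit. -/
def boundary (U : UnitIn G h₀ h₁ L) : Set V :=
  U.verts \ U.interior

end UnitIn

/-- An `(l, k)`-adjuster in `G` (relative to `d` and `m`): two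
`(z·√d·m⁶, √d·m²², 10m)`-units `F₁`, `F₂` with disjoint interiors, `z ∈ [1,3]`, a vertex
set `A` of size at most `2l` disjoint from the units, and `k + 1` paths between the two
core vertices inside `A ∪ {cores}` whose lengths are `l', l' + 2, …, l' + 2k` with `l' ≤ l`. -/
structure AdjusterIn {V : Type*} (G : SimpleGraph V) (d : Real) (m l k : Nat) where
  z : Real
  z_ge : 1 ≤ z
  z_le : z ≤ 3
  F₁ : UnitIn G ⌈z * Real.sqrt d * (m : Real) ^ 6⌉₊ ⌈Real.sqrt d * (m : Real) ^ 22⌉₊ (10 * m)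
  F₂ : UnitIn G ⌈z * Real.sqrt d * (m : Real) ^ 6⌉₊ ⌈Real.sqrt d * (m : Real) ^ 22⌉₊ (10 * m)
  int_disj : F₁.interior ∩ F₂.interior = ∅
  A : Set V
  A_card : A.ncard ≤ 2 * l
  A_disj : A ∩ (F₁.verts ∪ F₂.verts) = ∅
  l' : Nat
  l'_le : l' ≤ l
  paths : Fin (k + 1) → G.Walk F₁.core F₂.core
  paths_isPath : ∀ i, (paths i).IsPath
  paths_length : ∀ i : Fin (k + 1), (paths i).length = l' + 2 * (i : Nat)
  paths_support : ∀ i, ∀ x ∈ (paths i).support, x ∈ A ∪ {F₁.core, F₂.core}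

namespace AdjusterIn

variable {V : Type*} {G : SimpleGraph V} {d : Real} {m l k : Nat}

/-- The length `ℓ(P) = l' + 2k` of an adjuster. -/
def len (P : AdjusterIn G d m l k) : Nat := P.l' + 2 * k

/-- The perimeter `p(P) = A ∪ int(F₁) ∪ int(F₂)` of an adjuster. -/
def perimeter (P : AdjusterIn G d m l k) : Set V :=
  P.A ∪ P.F₁.interior ∪ P.F₂.interior

/-- The full vertex set of an adjuster. -/
def verts (P : AdjusterIn G d m l k) : Set V :=
  P.A ∪ P.F₁.verts ∪ P.F₂.verts

end AdjusterIn


open Classical in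
/-- Dependent random choice. -/
theorem drc {V : Type} [Fintype V] (G : SimpleGraph V) (U Wf : Finset V) (p c t : ℕ) (D : ℝ)
    (hD0 : 0 ≤ D) (hU : U.Nonempty)
    (hD : ∀ v ∈ U, D ≤ ((Wf.filter (fun w => G.Adj v w)).card : ℝ))
    (hnum : (Wf.card : ℝ) ^ 2 * (c : ℝ) ^ (p + 1) + t * (U.card : ℝ) ^ (p + 1) ≤
      (U.card * D) ^ (p + 1) / (Wf.card : ℝ) ^ p) :
    ∃ S ⊆ Wf, t ≤ S.card ∧ ∀ x ∈ S, ∀ y ∈ S, x ≠ y →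
      c ≤ (U.filter (fun v => G.Adj v x ∧ G.Adj v y)).card := by
  let Om := Fintype.piFinset (fun _ : Fin (p + 1) => U)
  let A : (Fin (p + 1) → V) → Finset V := fun f => Wf.filter (fun w => ∀ i, G.Adj (f i) w)
  let Bp : Finset (V × V) := (Wf ×ˢ Wf).filter (fun z =>
    z.1 ≠ z.2 ∧ (U.filter (fun v => G.Adj v z.1 ∧ G.Adj v z.2)).card < c)
  let B : (Fin (p + 1) → V) → Finset (V × V) := fun f =>
    Bp.filter (fun z => ∀ i, G.Adj (f i) z.1 ∧ G.Adj (f i) z.2)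
  have hOm : Om.card = U.card ^ (p + 1) := by simp [Om]
  have hA : ∑ f ∈ Om, (A f).card = ∑ w ∈ Wf, (U.filter (fun v => G.Adj v w)).card ^ (p + 1) := by
    simp only [A, Finset.card_filter _ Wf]
    rw [Finset.sum_comm]
    refine Finset.sum_congr rfl fun w _ => ?_
    rw [← Finset.card_filter]
    have : Om.filter (fun f => ∀ i, G.Adj (f i) w) =
        Fintype.piFinset (fun _ : Fin (p + 1) => U.filter (fun v => G.Adj v w)) := by
      ext f; simp [Om, Fintype.mem_piFinset, forall_and]
    rw [this]; simp
  have hB : ∑ f ∈ Om, (B f).card =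
      ∑ z ∈ Bp, (U.filter (fun v => G.Adj v z.1 ∧ G.Adj v z.2)).card ^ (p + 1) := by
    simp only [B, Finset.card_filter _ Bp]
    rw [Finset.sum_comm]
    refine Finset.sum_congr rfl fun z _ => ?_
    rw [← Finset.card_filter]
    have : Om.filter (fun f => ∀ i, G.Adj (f i) z.1 ∧ G.Adj (f i) z.2) =
        Fintype.piFinset (fun _ : Fin (p + 1) => U.filter (fun v => G.Adj v z.1 ∧ G.Adj v z.2)) := by
      ext f; simp [Om, Fintype.mem_piFinset, forall_and]
    rw [this]; simp
  have hB' : ∑ f ∈ Om, (B f).card ≤ Wf.card ^ 2 * c ^ (p + 1) := by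
    rw [hB]
    calc _ ≤ ∑ z ∈ Bp, c ^ (p + 1) := by
          refine Finset.sum_le_sum fun z hz => Nat.pow_le_pow_left ?_ _
          exact (Finset.mem_filter.1 hz).2.2.le
      _ = Bp.card * c ^ (p + 1) := by simp
      _ ≤ _ := by
          refine Nat.mul_le_mul_right _ ?_
          refine (Finset.card_filter_le _ _).trans ?_
          rw [Finset.card_product, sq]
  have hdc : (U.card : ℝ) * D ≤ ∑ w ∈ Wf, ((U.filter (fun v => G.Adj v w)).card : ℝ) := by
    have h1 : ∑ v ∈ U, (Wf.filter (fun w => G.Adj v w)).card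
        = ∑ w ∈ Wf, (U.filter (fun v => G.Adj v w)).card :=
      Finset.sum_card_bipartiteAbove_eq_sum_card_bipartiteBelow (fun v w => G.Adj v w)
    rw [← Nat.cast_sum, ← h1, Nat.cast_sum]
    calc (U.card : ℝ) * D = ∑ v ∈ U, D := by simp
      _ ≤ _ := Finset.sum_le_sum hD
  have hA' : (Wf.card : ℝ) ^ 2 * (c : ℝ) ^ (p + 1) + t * (U.card : ℝ) ^ (p + 1)
      ≤ ∑ f ∈ Om, ((A f).card : ℝ) := by
    refine hnum.trans ?_
    have h2 := pow_sum_div_card_le_sum_pow (s := Wf)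
      (f := fun w => ((U.filter (fun v => G.Adj v w)).card : ℝ)) (fun _ _ => by positivity) p
    have h3 : ∑ f ∈ Om, ((A f).card : ℝ)
        = ∑ w ∈ Wf, ((U.filter (fun v => G.Adj v w)).card : ℝ) ^ (p + 1) := by exact_mod_cast hA
    rw [h3]
    refine le_trans ?_ h2
    gcongr
  have hB'' : ∑ f ∈ Om, ((B f).card : ℝ) ≤ (Wf.card : ℝ) ^ 2 * (c : ℝ) ^ (p + 1) := by
    exact_mod_cast hB'
  have hne : Om.Nonempty := by
    rw [← Finset.card_pos, hOm]; exact pow_pos hU.card_pos _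
  obtain ⟨f, hf, hfl⟩ : ∃ f ∈ Om, ((t : ℝ) + (B f).card) ≤ (A f).card := by
    apply Finset.exists_le_of_sum_le hne
    rw [Finset.sum_add_distrib]
    have : ∑ f ∈ Om, (t : ℝ) = t * (U.card : ℝ) ^ (p + 1) := by
      rw [Finset.sum_const, hOm]; simp; ring
    linarith
  refine ⟨A f \ (B f).image Prod.fst, ?_, ?_, ?_⟩
  · exact Finset.sdiff_subset.trans (Finset.filter_subset _ _)
  · have h1 : t + (B f).card ≤ (A f).card := by exact_mod_cast hfl
    have h2 := Finset.le_card_sdiff ((B f).image Prod.fst) (A f)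
    have h3 : ((B f).image Prod.fst).card ≤ (B f).card := Finset.card_image_le
    omega
  · intro x hx y hy hxy
    by_contra hlt
    push Not at hlt
    rw [Finset.mem_sdiff] at hx hy
    apply hx.2
    rw [Finset.mem_image]
    have hx1 := Finset.mem_filter.1 hx.1
    have hy1 := Finset.mem_filter.1 hy.1
    refine ⟨(x, y), ?_, rfl⟩
    simp only [B, Bp, Finset.mem_filter, Finset.mem_product]
    exact ⟨⟨⟨hx1.1, hy1.1⟩, hxy, hlt⟩, fun i => ⟨hx1.2 i, hy1.2 i⟩⟩

open Classical in
/-- Branch vertices with many common neighbours give a one-subdivision. -/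
theorem hasTK_of {V : Type} [Fintype V] (G : SimpleGraph V) (U S : Finset V) (t : ℕ)
    (hdisj : Disjoint U S) (hS : t ≤ S.card)
    (h : ∀ x ∈ S, ∀ y ∈ S, x ≠ y →
      t ^ 2 ≤ (U.filter (fun v => G.Adj v x ∧ G.Adj v y)).card) : HasTK G t 1 := by
  obtain ⟨S', hS', hc⟩ := Finset.exists_subset_card_eq hS
  let e := (S'.equivFinOfCardEq hc).symm
  let b : Fin t → V := fun i => (e i : V)
  have hb : Function.Injective b := fun i j hij => e.injective (Subtype.ext hij)
  have hbS : ∀ i, b i ∈ S := fun i => hS' (e i).2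
  let I := {z : Fin t × Fin t // z.1 < z.2}
  let T : I → Finset V := fun z => U.filter (fun v => G.Adj v (b z.1.1) ∧ G.Adj v (b z.1.2))
  obtain ⟨x, hxi, hx⟩ := (Finset.all_card_le_biUnion_card_iff_exists_injective T).mp (by
    intro s
    rcases s.eq_empty_or_nonempty with rfl | ⟨z, hz⟩
    · simp
    · have h1 : s.card ≤ t ^ 2 := by
        refine (Finset.card_le_univ s).trans ?_
        refine (Fintype.card_subtype_le _).trans ?_
        simp [sq]
      have h2 : t ^ 2 ≤ (T z).card := h _ (hbS _) _ (hbS _) (fun hh => (z.2.ne (hb hh)))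
      exact h1.trans (h2.trans (Finset.card_le_card (Finset.subset_biUnion_of_mem T hz))))
  have hxU : ∀ z, x z ∈ U ∧ G.Adj (x z) (b z.1.1) ∧ G.Adj (x z) (b z.1.2) := fun z => by
    simpa [T] using hx z
  have hxb : ∀ z i, x z ≠ b i := fun z i hh =>
    Finset.disjoint_left.1 hdisj (hxU z).1 (hh ▸ hbS i)
  refine ⟨_, b, hb, fun i j hij => SimpleGraph.Walk.cons (hxU ⟨(i, j), hij⟩).2.1.symm
    (SimpleGraph.Walk.cons (hxU ⟨(i, j), hij⟩).2.2 SimpleGraph.Walk.nil), ?_, ?_, ?_, rfl⟩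
  · intro i j hij
    have h1 := hxb ⟨(i, j), hij⟩ i
    have h2 := hxb ⟨(i, j), hij⟩ j
    have h3 : b i ≠ b j := fun hh => hij.ne (hb hh)
    simp [h1.symm, h2, h3]
  · intro i j hij; rfl
  · intro i j hij i' j' hij' hne v hv hv'
    have hne' : x ⟨(i, j), hij⟩ ≠ x ⟨(i', j'), hij'⟩ := fun hh => hne (by
      exact congrArg Subtype.val (hxi hh))
    simp only [SimpleGraph.Walk.support_cons, SimpleGraph.Walk.support_nil, List.mem_cons,
      List.not_mem_nil, or_false] at hv hv'
    have := hxb ⟨(i, j), hij⟩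
    have := hxb ⟨(i', j'), hij'⟩
    grind


theorem num_drc (s m w u : ℝ) (hm : 64 ≤ m) (hs : m ^ 100 ≤ s) (hw : w ≤ s ^ 2 * m ^ 60)
    (hw0 : s ^ 2 / 4 ≤ w) (hu : (s * m) ^ 2 * (4 * m ^ 60) ^ 64 ≤ u) :
    ∃ p : ℕ, w ^ 2 * ((s * m) ^ 2) ^ (p + 1) + (s * m) * u ^ (p + 1) ≤
      (u * (s ^ 2 / 4)) ^ (p + 1) / w ^ p := by
  have hm0 : 0 < m := by linarith
  have hm1 : 1 ≤ m := by linarith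
  have hs0 : 0 < s := lt_of_lt_of_le (by positivity) hs
  have hs1 : 1 ≤ s := le_trans (one_le_pow₀ hm1) hs
  have hwp : 0 < w := lt_of_lt_of_le (by positivity) hw0
  set b : ℝ := 4 * m ^ 60 with hb
  have hb1 : 1 < b := by
    have : 1 ≤ m ^ 60 := one_le_pow₀ hm1
    linarith
  have hb0 : 0 < b := by linarith
  have hup : 0 < u := lt_of_lt_of_le (by positivity) hu
  obtain ⟨p, hp1, hp2⟩ := exists_nat_pow_near (x := s ^ 4 * m ^ 120) (y := b ^ 64)
    (one_le_mul_of_one_le_of_one_le (one_le_pow₀ hs1) (one_le_pow₀ hm1))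
    (one_lt_pow₀ hb1 (by norm_num))
  refine ⟨p, ?_⟩
  -- bound on b ^ p
  have h120 : m ^ 120 ≤ s ^ 2 := by
    calc m ^ 120 ≤ m ^ 200 := pow_le_pow_right₀ hm1 (by norm_num)
      _ = (m ^ 100) ^ 2 := by rw [← pow_mul]
      _ ≤ s ^ 2 := by gcongr
  have hbp : (b ^ p) ^ 10 ≤ s := by
    have h1 : ((b ^ p) ^ 10) ^ 6 ≤ s ^ 6 := by
      calc ((b ^ p) ^ 10) ^ 6 = b ^ (p * 60) := by rw [← pow_mul, ← pow_mul]
        _ ≤ b ^ (64 * p) := pow_le_pow_right₀ hb1.le (by omega)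
        _ = (b ^ 64) ^ p := by rw [pow_mul]
        _ ≤ s ^ 4 * m ^ 120 := hp1
        _ ≤ s ^ 4 * s ^ 2 := by gcongr
        _ = s ^ 6 := by ring
    exact le_of_pow_le_pow_left₀ (by norm_num) hs0.le h1
  have hbq : b ^ (p + 1) * (8 * m) ≤ s := by
    have h1 : (b ^ (p + 1) * (8 * m)) ^ 10 ≤ s ^ 10 := by
      have h2 : b * (8 * m) ≤ m ^ 62 := by
        have : b * (8 * m) = 32 * m ^ 61 := by rw [hb]; ring
        rw [this]
        calc 32 * m ^ 61 ≤ m * m ^ 61 := by gcongr; linarith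
          _ = m ^ 62 := by ring
      calc (b ^ (p + 1) * (8 * m)) ^ 10 = (b ^ p) ^ 10 * (b * (8 * m)) ^ 10 := by ring
        _ ≤ s * (m ^ 62) ^ 10 := by gcongr
        _ = s * m ^ 620 := by rw [← pow_mul]
        _ ≤ s * m ^ 900 := by
            have : m ^ 620 ≤ m ^ 900 := pow_le_pow_right₀ hm1 (by norm_num)
            gcongr
        _ = s * (m ^ 100) ^ 9 := by rw [← pow_mul]
        _ ≤ s * s ^ 9 := by gcongr
        _ = s ^ 10 := by ring
    exact le_of_pow_le_pow_left₀ (by norm_num) hs0.le h1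
  -- first term
  have hA : w ^ 2 * ((s * m) ^ 2) ^ (p + 1) ≤ u ^ (p + 1) := by
    have h1 : w ^ 2 ≤ (b ^ 64) ^ (p + 1) := by
      calc w ^ 2 ≤ (s ^ 2 * m ^ 60) ^ 2 := by gcongr
        _ = s ^ 4 * m ^ 120 := by ring
        _ ≤ _ := hp2.le
    calc w ^ 2 * ((s * m) ^ 2) ^ (p + 1) ≤ (b ^ 64) ^ (p + 1) * ((s * m) ^ 2) ^ (p + 1) := by gcongr
      _ = ((s * m) ^ 2 * b ^ 64) ^ (p + 1) := by rw [← mul_pow, mul_comm]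
      _ ≤ u ^ (p + 1) := by gcongr
  have hB : (s * m + 1) * u ^ (p + 1) ≤ (u * (s ^ 2 / 4)) ^ (p + 1) / w ^ p := by
    have hr : (s ^ 2 / 4) / w ≥ 1 / b := by
      rw [ge_iff_le, div_le_div_iff₀ hb0 hwp, hb]
      linarith
    have h1 : (u * (s ^ 2 / 4)) ^ (p + 1) / w ^ p = w * u ^ (p + 1) * ((s ^ 2 / 4) / w) ^ (p + 1) := by
      rw [div_pow, mul_pow]; field_simp; ring
    rw [h1]
    have h2 : w * u ^ (p + 1) * (1 / b) ^ (p + 1) ≤ w * u ^ (p + 1) * ((s ^ 2 / 4) / w) ^ (p + 1) := by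
      gcongr
    refine le_trans ?_ h2
    have h3 : s * m + 1 ≤ w * (1 / b) ^ (p + 1) := by
      rw [one_div, inv_pow, ← div_eq_mul_inv, le_div_iff₀ (by positivity)]
      have h4 : 0 < b ^ (p + 1) := by positivity
      have h5 : 1 ≤ s * m := one_le_mul_of_one_le_of_one_le hs1 hm1
      calc (s * m + 1) * b ^ (p + 1) ≤ (2 * (s * m)) * b ^ (p + 1) := by gcongr; linarith
        _ = s * (b ^ (p + 1) * (8 * m)) / 4 := by ring
        _ ≤ s * s / 4 := by gcongr
        _ = s ^ 2 / 4 := by ring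
        _ ≤ w := hw0
    calc (s * m + 1) * u ^ (p + 1) ≤ (w * (1 / b) ^ (p + 1)) * u ^ (p + 1) := by gcongr
      _ = _ := by ring
  linarith

open Classical in
theorem few_bad {V : Type} [Fintype V] (G : SimpleGraph V) (s m t : ℕ) (hm : 64 ≤ m)
    (hs : m ^ 100 ≤ s) (ht : t ≤ s * m) (hTK : ¬ HasTK G t 1)
    (hn : s ^ 2 * m ^ 4000 ≤ Fintype.card V) (Wf U : Finset V) (hdisj : Disjoint U Wf)
    (hW : Wf.card ≤ s ^ 2 * m ^ 60)
    (hU : ∀ v ∈ U, s ^ 2 ≤ 4 * (Wf.filter (fun w => G.Adj v w)).card) :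
    4 * U.card ≤ Fintype.card V := by
  by_contra hcon
  push Not at hcon
  apply hTK
  have hne : U.Nonempty := by
    rw [← Finset.card_pos]; omega
  have hm1 : (1 : ℝ) ≤ m := by exact_mod_cast (by omega : 1 ≤ m)
  have hub : ((s : ℝ) * m) ^ 2 * (4 * (m : ℝ) ^ 60) ^ 64 ≤ U.card := by
    have h1 : ((s : ℝ) ^ 2 * (m : ℝ) ^ 4000) ≤ 4 * U.card := by
      exact_mod_cast (hn.trans hcon.le)
    have h2 : (4 * (m : ℝ) ^ 60) ≤ (m : ℝ) ^ 61 := by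
      have : (64 : ℝ) ≤ m := by exact_mod_cast hm
      calc (4 * (m : ℝ) ^ 60) ≤ m * (m : ℝ) ^ 60 := by gcongr; linarith
        _ = _ := by ring
    have h3 : 4 * (((s : ℝ) * m) ^ 2 * (4 * (m : ℝ) ^ 60) ^ 64) ≤ (s : ℝ) ^ 2 * (m : ℝ) ^ 4000 := by
      have : (64 : ℝ) ≤ m := by exact_mod_cast hm
      calc 4 * (((s : ℝ) * m) ^ 2 * (4 * (m : ℝ) ^ 60) ^ 64)
          ≤ m * (((s : ℝ) * m) ^ 2 * ((m : ℝ) ^ 61) ^ 64) := by gcongr; linarith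
        _ = (s : ℝ) ^ 2 * (m : ℝ) ^ 3907 := by rw [← pow_mul, mul_pow]; ring
        _ ≤ _ := by
          have : (m : ℝ) ^ 3907 ≤ (m : ℝ) ^ 4000 := pow_le_pow_right₀ hm1 (by norm_num)
          gcongr
    linarith
  obtain ⟨v0, hv0⟩ := hne
  have hw0 : (s : ℝ) ^ 2 / 4 ≤ Wf.card := by
    have h1 := hU v0 hv0
    have h2 : (Wf.filter (fun w => G.Adj v0 w)).card ≤ Wf.card := Finset.card_filter_le _ _
    have h3 : s ^ 2 ≤ 4 * Wf.card := by omega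
    have h4 : (s : ℝ) ^ 2 ≤ 4 * Wf.card := by exact_mod_cast h3
    linarith
  obtain ⟨p, hp⟩ := num_drc s m Wf.card U.card (by exact_mod_cast hm) (by exact_mod_cast hs)
    (by exact_mod_cast hW) hw0 hub
  obtain ⟨S, hSW, hSc, hS⟩ := drc G U Wf p ((s * m) ^ 2) (s * m) ((s : ℝ) ^ 2 / 4) (by positivity)
    ⟨v0, hv0⟩ (fun v hv => by
      have h4 : (s : ℝ) ^ 2 ≤ 4 * (Wf.filter (fun w => G.Adj v w)).card := by exact_mod_cast hU v hv
      linarith) (by push_cast; exact hp)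
  refine hasTK_of G U S t (Finset.disjoint_of_subset_right hSW hdisj) (ht.trans hSc) ?_
  intro x hx y hy hxy
  exact (Nat.pow_le_pow_left ht 2).trans (hS x hx y hy hxy)


open Classical in
/-- A subset with large minimum degree avoiding a given set. -/
theorem core_sub {V : Type} [Fintype V] (G : SimpleGraph V) (s m t : ℕ) (hm : 64 ≤ m)
    (hs : m ^ 100 ≤ s) (ht : t ≤ s * m) (hTK : ¬ HasTK G t 1)
    (hn : s ^ 2 * m ^ 4000 ≤ Fintype.card V)
    (hdeg : ∀ v, s ^ 2 ≤ 2 * (Finset.univ.filter (fun w => G.Adj v w)).card)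
    (Wf : Finset V) (hW : Wf.card ≤ s ^ 2 * m ^ 60) :
    ∃ T : Finset V, T.Nonempty ∧ Disjoint T Wf ∧
      ∀ v ∈ T, s ^ 2 ≤ 16 * (T.filter (fun w => G.Adj v w)).card := by
  have hs0 : 0 < s := lt_of_lt_of_le (by positivity) hs
  have hs2 : 0 < s ^ 2 := by positivity
  let T0 : Finset V := Wfᶜ
  let f : Finset V → ℕ := fun T => ∑ v ∈ T, (T.filter (fun w => G.Adj v w)).card
  let U : Finset V := T0.filter (fun v => s ^ 2 ≤ 4 * (Wf.filter (fun w => G.Adj v w)).card)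
  have hU : 4 * U.card ≤ Fintype.card V := by
    refine few_bad G s m t hm hs ht hTK hn Wf U ?_ hW ?_
    · refine Finset.disjoint_left.2 fun v hv hv' => ?_
      simp [U, T0] at hv; exact hv.1 hv'
    · intro v hv; exact (Finset.mem_filter.1 hv).2
  have hWn : 4 * Wf.card ≤ Fintype.card V := by
    have h1 : 4 * m ^ 60 ≤ m ^ 4000 := by
      calc 4 * m ^ 60 ≤ m * m ^ 60 := by gcongr; omega
        _ = m ^ 61 := by ring
        _ ≤ m ^ 4000 := Nat.pow_le_pow_right (by omega) (by norm_num)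
    calc 4 * Wf.card ≤ 4 * (s ^ 2 * m ^ 60) := by gcongr
      _ = s ^ 2 * (4 * m ^ 60) := by ring
      _ ≤ s ^ 2 * m ^ 4000 := by gcongr
      _ ≤ _ := hn
  have hnpos : 0 < Fintype.card V := lt_of_lt_of_le (by positivity) hn
  have hT0c : T0.card + Wf.card = Fintype.card V := by
    simp only [T0]; rw [Finset.card_compl]; have := Finset.card_le_univ Wf; omega
  have hf0 : s ^ 2 * T0.card ≤ 8 * f T0 := by
    have h1 : ∀ v ∈ T0 \ U, s ^ 2 ≤ 4 * (T0.filter (fun w => G.Adj v w)).card := by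
      intro v hv
      rw [Finset.mem_sdiff] at hv
      have h2 : ¬ s ^ 2 ≤ 4 * (Wf.filter (fun w => G.Adj v w)).card := fun h =>
        hv.2 (Finset.mem_filter.2 ⟨hv.1, h⟩)
      have h3 := hdeg v
      have h4 : (Finset.univ.filter (fun w => G.Adj v w)).card ≤
          (T0.filter (fun w => G.Adj v w)).card + (Wf.filter (fun w => G.Adj v w)).card := by
        rw [← Finset.card_union_of_disjoint]
        · apply Finset.card_le_card
          intro w hw; simp [T0] at hw ⊢; tauto
        · refine Finset.disjoint_left.2 fun v hv hv' => ?_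
          simp [T0] at hv hv'; tauto
      omega
    have h2 : (T0 \ U).card * s ^ 2 ≤ 4 * f T0 := by
      calc (T0 \ U).card * s ^ 2 = ∑ v ∈ T0 \ U, s ^ 2 := by simp
        _ ≤ ∑ v ∈ T0 \ U, 4 * (T0.filter (fun w => G.Adj v w)).card := Finset.sum_le_sum h1
        _ ≤ ∑ v ∈ T0, 4 * (T0.filter (fun w => G.Adj v w)).card :=
          Finset.sum_le_sum_of_subset Finset.sdiff_subset
        _ = 4 * f T0 := by rw [Finset.mul_sum]
    have h3 : (T0 \ U).card + U.card = T0.card :=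
      Finset.card_sdiff_add_card_eq_card (Finset.filter_subset _ _)
    have h4 : T0.card ≤ 2 * (T0 \ U).card := by omega
    calc s ^ 2 * T0.card ≤ s ^ 2 * (2 * (T0 \ U).card) := by gcongr
      _ = 2 * ((T0 \ U).card * s ^ 2) := by ring
      _ ≤ 8 * f T0 := by omega
  let Fam : Finset (Finset V) := T0.powerset.filter (fun T => T.Nonempty ∧ s ^ 2 * T.card ≤ 8 * f T)
  have hFam : Fam.Nonempty := by
    refine ⟨T0, ?_⟩
    simp only [Fam, Finset.mem_filter, Finset.mem_powerset]
    refine ⟨subset_rfl, ?_, hf0⟩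
    rw [← Finset.card_pos]; omega
  obtain ⟨T, hT, hmin⟩ := Finset.exists_min_image Fam Finset.card hFam
  simp only [Fam, Finset.mem_filter, Finset.mem_powerset] at hT
  obtain ⟨hTT, hTne, hTf⟩ := hT
  refine ⟨T, hTne, ?_, ?_⟩
  · refine Finset.disjoint_left.2 fun v hv hv' => ?_
    have := hTT hv; simp [T0] at this; exact this hv'
  · intro v hv
    by_contra hlt
    push Not at hlt
    have hkey : f T = f (T.erase v) + 2 * (T.filter (fun w => G.Adj v w)).card := by
      have e1 : ∀ x, ((T.filter (fun w => G.Adj x w)).card) =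
          (((T.erase v).filter (fun w => G.Adj x w)).card) + (if G.Adj x v then 1 else 0) := by
        intro x
        simp only [Finset.card_filter]
        rw [← Finset.sum_erase_add T _ hv]
      have e2 : f T = (∑ x ∈ T.erase v, (T.filter (fun w => G.Adj x w)).card)
          + (T.filter (fun w => G.Adj v w)).card := (Finset.sum_erase_add T _ hv).symm
      rw [e2, Finset.sum_congr rfl (fun x _ => e1 x), Finset.sum_add_distrib]
      have e3 : ∑ x ∈ T.erase v, (if G.Adj x v then 1 else 0) =
          (T.filter (fun w => G.Adj v w)).card := by
        rw [e1 v, Finset.card_filter]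
        simp [G.adj_comm]
      rw [e3]
      simp only [f]; ring
    have hc := Finset.card_erase_add_one hv
    have h5 : s ^ 2 * (T.erase v).card ≤ 8 * f (T.erase v) := by
      have : s ^ 2 * T.card = s ^ 2 * (T.erase v).card + s ^ 2 := by rw [← hc]; ring
      omega
    have hne : (T.erase v).Nonempty := by
      by_contra h
      rw [Finset.not_nonempty_iff_eq_empty] at h
      have h6 : f T = 2 * (T.filter (fun w => G.Adj v w)).card := by
        rw [hkey, h]; simp [f]
      have h7 : T.card = 1 := by rw [← hc, h]; simp
      rw [h7] at hTf
      omega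
    have h8 := hmin (T.erase v) (by
      simp only [Fam, Finset.mem_filter, Finset.mem_powerset]
      exact ⟨(Finset.erase_subset _ _).trans hTT, hne, h5⟩)
    omega

open Classical in
/-- Short cycle in a set with large minimum degree. -/
theorem short_cycle {V : Type} [Fintype V] (G : SimpleGraph V) (s m : ℕ)
    (hn : Fintype.card V < s ^ m) (T : Finset V) (hT : T.Nonempty)
    (hdeg : ∀ v ∈ T, s + m + 1 ≤ (T.filter (fun w => G.Adj v w)).card) :
    ∃ (u : V) (c : G.Walk u u), c.IsCycle ∧ c.length ≤ 2 * m ∧ ∀ x ∈ c.support, x ∈ T := by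
  by_contra hcon
  push Not at hcon
  have huniq : ∀ {u v : V} (p q : G.Walk u v), p.IsPath → q.IsPath → p.length ≤ m → q.length ≤ m →
      (∀ x ∈ p.support, x ∈ T) → (∀ x ∈ q.support, x ∈ T) → p = q := by
    intro u v p q hp hq hpl hql hpT hqT
    by_contra hne
    obtain ⟨u', v', p', q', hp', hq', hc⟩ := hp.exists_isCycle_of_ne hq hne
    have l1 : p'.length ≤ p.length := by
      obtain ⟨r1, r2, hr⟩ := hp'
      rw [hr]; simp only [SimpleGraph.Walk.length_append]; omega
    have l2 : q'.length ≤ q.length := by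
      obtain ⟨r1, r2, hr⟩ := hq'
      rw [hr]; simp only [SimpleGraph.Walk.length_append]; omega
    obtain ⟨x, hx, hxT⟩ := hcon u' _ hc (by
      rw [SimpleGraph.Walk.length_append, SimpleGraph.Walk.length_reverse]; omega)
    rw [SimpleGraph.Walk.mem_support_append_iff, SimpleGraph.Walk.support_reverse,
      List.mem_reverse] at hx
    rcases hx with hx | hx
    · exact hxT (hpT _ (hp'.support_subset hx))
    · exact hxT (hqT _ (hq'.support_subset hx))
  obtain ⟨v0, hv0⟩ := hT
  let S : ℕ → Finset V := fun j => T.filter (fun w => ∃ p : G.Walk v0 w, p.IsPath ∧ p.length = j ∧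
    ∀ x ∈ p.support, x ∈ T)
  have hS : ∀ j ≤ m, s ^ j ≤ (S j).card := by
    intro j
    induction j with
    | zero =>
      intro _
      have : v0 ∈ S 0 := by
        simp only [S, Finset.mem_filter]
        exact ⟨hv0, SimpleGraph.Walk.nil, by simp, by simp, by simpa using hv0⟩
      simpa using Finset.card_pos.2 ⟨v0, this⟩
    | succ j ih =>
      intro hj
      have ih := ih (by omega)
      have hch : ∀ w : V, ∃ p : Finset V, w ∈ S j → ∃ q : G.Walk v0 w, q.IsPath ∧ q.length = j ∧
          (∀ x ∈ q.support, x ∈ T) ∧ p = q.support.toFinset := by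
        intro w
        by_cases hw : w ∈ S j
        · obtain ⟨q, h1, h2, h3⟩ := (Finset.mem_filter.1 hw).2
          exact ⟨_, fun _ => ⟨q, h1, h2, h3, rfl⟩⟩
        · exact ⟨∅, fun h => absurd h hw⟩
      choose P hP using hch
      let E : V → Finset V := fun w => (T.filter (fun x => G.Adj w x)) \ P w
      have hE : ∀ w ∈ S j, s ≤ (E w).card := by
        intro w hw
        obtain ⟨q, h1, h2, h3, h4⟩ := hP w hw
        have h5 := hdeg w (Finset.mem_filter.1 hw).1
        have h6 : (P w).card ≤ j + 1 := by
          rw [h4]; refine (List.toFinset_card_le _).trans ?_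
          rw [SimpleGraph.Walk.length_support, h2]
        have h7 := Finset.le_card_sdiff (P w) (T.filter (fun x => G.Adj w x))
        simp only [E]; omega
      have hext : ∀ w ∈ S j, ∀ x ∈ E w, ∃ (q : G.Walk v0 w) (h : G.Adj w x),
          (q.concat h).IsPath ∧ (q.concat h).length = j + 1 ∧
          ∀ y ∈ (q.concat h).support, y ∈ T := by
        intro w hw x hx
        obtain ⟨q, h1, h2, h3, h4⟩ := hP w hw
        simp only [E, Finset.mem_sdiff, Finset.mem_filter, h4, List.mem_toFinset] at hx
        refine ⟨q, hx.1.2, h1.concat hx.2 _, by simp [h2], ?_⟩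
        intro y hy
        rw [SimpleGraph.Walk.support_concat] at hy
        simp at hy
        rcases hy with hy | rfl
        · exact h3 y hy
        · exact hx.1.1
      have hdis : (S j : Set V).PairwiseDisjoint E := by
        intro w hw w' hw' hne
        refine Finset.disjoint_left.2 fun x hx hx' => hne ?_
        obtain ⟨q, h, a1, a2, a3⟩ := hext w hw x hx
        obtain ⟨q', h', b1, b2, b3⟩ := hext w' hw' x hx'
        have := huniq _ _ a1 b1 (by omega) (by omega) a3 b3
        exact (SimpleGraph.Walk.concat_inj this).1
      calc s ^ (j + 1) = s ^ j * s := pow_succ _ _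
        _ ≤ (S j).card * s := by gcongr
        _ = ∑ w ∈ S j, s := by simp
        _ ≤ ∑ w ∈ S j, (E w).card := Finset.sum_le_sum hE
        _ = ((S j).biUnion E).card := (Finset.card_biUnion hdis).symm
        _ ≤ (S (j + 1)).card := by
          apply Finset.card_le_card
          intro x hx
          obtain ⟨w, hw, hx⟩ := Finset.mem_biUnion.1 hx
          obtain ⟨q, h, a1, a2, a3⟩ := hext w hw x hx
          exact Finset.mem_filter.2 ⟨a3 x (by simp), _, a1, a2, a3⟩
  have := hS m le_rfl
  have := Finset.card_le_univ (S m)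
  omega


/-- A cycle with two almost antipodal vertices, both of which carry many private neighbours. -/
structure Gad {V : Type} (G : SimpleGraph V) where
  a : V
  b : V
  A : Finset V
  La : Finset V
  Lb : Finset V
  l' : ℕ
  w0 : G.Walk a b
  w1 : G.Walk a b

namespace Gad

open Classical in
/-- All vertices of a gadget. -/
noncomputable def vs {V : Type} {G : SimpleGraph V} (g : Gad G) : Finset V :=
  insert g.a (insert g.b g.A) ∪ g.La ∪ g.Lb

/-- The requirements on a gadget. -/
structure Good {V : Type} {G : SimpleGraph V} (g : Gad G) (m D : ℕ) : Prop where
  hab : g.a ≠ g.b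
  haA : g.a ∉ g.A
  hbA : g.b ∉ g.A
  p0 : g.w0.IsPath
  p1 : g.w1.IsPath
  l0 : g.w0.length = g.l'
  l1 : g.w1.length = g.l' + 2
  s0 : ∀ x ∈ g.w0.support, x ∈ g.A ∨ x = g.a ∨ x = g.b
  s1 : ∀ x ∈ g.w1.support, x ∈ g.A ∨ x = g.a ∨ x = g.b
  cA : g.A.card ≤ 2 * g.l'
  lm : g.l' ≤ m
  La_adj : ∀ x ∈ g.La, G.Adj g.a x
  Lb_adj : ∀ x ∈ g.Lb, G.Adj g.b x
  La_card : g.La.card = D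
  Lb_card : g.Lb.card = D
  Lab : Disjoint g.La g.Lb

end Gad

theorem bip_even {V : Type} (G : SimpleGraph V) (h : IsBipartite G) {u : V} (c : G.Walk u u) :
    Even c.length := by
  classical
  obtain ⟨A, hA⟩ := h
  let col : G.Coloring Bool := SimpleGraph.Coloring.mk (fun v => decide (v ∈ A)) (by
    intro v w hvw
    have := hA hvw
    by_cases h1 : v ∈ A <;> by_cases h2 : w ∈ A <;> simp_all)
  exact (col.even_length_iff_congr c).2 Iff.rfl

open Classical in
theorem exists_gad {V : Type} [Fintype V] (G : SimpleGraph V) (s m t D : ℕ) (hm : 64 ≤ m)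
    (hs : m ^ 100 ≤ s) (ht : t ≤ s * m) (hTK : ¬ HasTK G t 1)
    (hn : s ^ 2 * m ^ 4000 ≤ Fintype.card V) (hn' : Fintype.card V < s ^ m)
    (hbip : IsBipartite G) (hD : 64 * D ≤ s ^ 2)
    (hdeg : ∀ v, s ^ 2 ≤ 2 * (Finset.univ.filter (fun w => G.Adj v w)).card)
    (Wf : Finset V) (hW : Wf.card ≤ s ^ 2 * m ^ 60) :
    ∃ g : Gad G, g.Good m D ∧ Disjoint g.vs Wf ∧ g.vs.card ≤ s ^ 2 := by
  obtain ⟨T, hTne, hTW, hTd⟩ := core_sub G s m t hm hs ht hTK hn hdeg Wf hW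
  have hms : 64 * m ≤ s := by
    calc 64 * m ≤ m * m := by gcongr
      _ = m ^ 2 := by ring
      _ ≤ m ^ 100 := Nat.pow_le_pow_right (by omega) (by norm_num)
      _ ≤ s := hs
  have hss : 4096 * s ≤ s ^ 2 := by rw [sq]; gcongr; omega
  obtain ⟨u, c, hc, hcl, hcT⟩ := short_cycle G s m hn' T hTne (fun v hv => by
    have := hTd v hv; omega)
  obtain ⟨r, hr⟩ := bip_even G hbip c
  have h3 := hc.three_le_length
  let b := c.getVert (r - 1)
  have hb : b = c.getVert (r - 1) := rfl
  let w0 : G.Walk u b := c.take (r - 1)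
  let w1 : G.Walk u b := (c.drop (r - 1)).reverse
  have hbT : b ∈ T := hcT _ (c.getVert_mem_support _)
  have huT : u ∈ T := hcT _ c.start_mem_support
  have hp0 : w0.IsPath := hc.isPath_take (by omega)
  have hp1 : w1.IsPath := (hc.isPath_drop (by omega)).reverse
  have hl0 : w0.length = r - 1 := by
    simp only [w0, SimpleGraph.Walk.take_length]; omega
  have hl1 : w1.length = r - 1 + 2 := by
    simp only [w1, SimpleGraph.Walk.length_reverse, SimpleGraph.Walk.drop_length]; omega
  have hub : u ≠ b := by
    intro h
    have h1 : c.getVert (r - 1) ≠ c.getVert 0 := by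
      intro h'
      have := hc.getVert_injOn' (x₁ := r - 1) (x₂ := 0) (by simp; omega) (by simp) h'
      omega
    simp at h1; exact h1 (h.symm)
  let A : Finset V := (c.support.toFinset.erase u).erase b
  have hAc : A.card ≤ 2 * (r - 1) := by
    have e1 : c.support.toFinset.card ≤ 2 * r := by
      have : c.support.toFinset = c.support.tail.toFinset := by
        ext x
        simp only [List.mem_toFinset]
        constructor
        · intro hx
          rcases (SimpleGraph.Walk.mem_support_iff c).1 hx with rfl | hx
          · exact SimpleGraph.Walk.end_mem_tail_support hc.not_nil
          · exact hx
        · exact List.mem_of_mem_tail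
      rw [this]
      refine (List.toFinset_card_le _).trans ?_
      simp; omega
    have e2 : u ∈ c.support.toFinset := by simp
    have e3 : b ∈ c.support.toFinset.erase u := by
      simp only [Finset.mem_erase, List.mem_toFinset]
      exact ⟨hub.symm, c.getVert_mem_support _⟩
    simp only [A]
    rw [Finset.card_erase_of_mem e3, Finset.card_erase_of_mem e2]
    omega
  obtain ⟨La, hLa, hLac⟩ := Finset.exists_subset_card_eq (s := T.filter (fun w => G.Adj u w)) (n := D)
    (by have := hTd u huT; omega)
  obtain ⟨Lb, hLb, hLbc⟩ := Finset.exists_subset_card_eq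
    (s := (T.filter (fun w => G.Adj b w)) \ La) (n := D) (by
      have := hTd b hbT
      have := Finset.le_card_sdiff La (T.filter (fun w => G.Adj b w))
      omega)
  have hmem : ∀ x ∈ c.support, x ∈ A ∨ x = u ∨ x = b := by
    intro x hx
    simp only [A, Finset.mem_erase, List.mem_toFinset]
    tauto
  refine ⟨⟨u, b, A, La, Lb, r - 1, w0, w1⟩, ?_, ?_, ?_⟩
  · constructor
    · exact hub
    · simp [A]
    · simp [A]
    · exact hp0
    · exact hp1
    · exact hl0
    · exact hl1
    · intro x hx; exact hmem x ((c.isSubwalk_take _).support_subset hx)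
    · intro x hx
      refine hmem x ((c.isSubwalk_drop (r - 1)).support_subset ?_)
      simpa [w1] using hx
    · exact hAc
    · simp only; omega
    · intro x hx; exact (Finset.mem_filter.1 (hLa hx)).2
    · intro x hx; exact (Finset.mem_filter.1 (Finset.mem_sdiff.1 (hLb hx)).1).2
    · exact hLac
    · exact hLbc
    · exact Finset.disjoint_left.2 fun x hx hx' => (Finset.mem_sdiff.1 (hLb hx')).2 hx
  · refine Finset.disjoint_of_subset_left ?_ hTW
    intro x hx
    simp only [Gad.vs, Finset.mem_union, Finset.mem_insert] at hx
    rcases hx with ((rfl | rfl | hx) | hx) | hx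
    · exact huT
    · exact hbT
    · simp only [A, Finset.mem_erase, List.mem_toFinset] at hx
      exact hcT x hx.2.2
    · exact (Finset.mem_filter.1 (hLa hx)).1
    · exact (Finset.mem_filter.1 (Finset.mem_sdiff.1 (hLb hx)).1).1
  · simp only [Gad.vs]
    refine (Finset.card_union_le _ _).trans ?_
    have e1 := Finset.card_union_le (insert u (insert b A)) La
    have e2 := Finset.card_insert_le u (insert b A)
    have e3 := Finset.card_insert_le b A
    omega

/-- A star: its centre and its leaves. -/
structure Str (V : Type) where
  c : V
  L : Finset V

open Classical in
/-- The vertices of a star. -/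
noncomputable def Str.vs {V : Type} (S : Str V) : Finset V := insert S.c S.L

open Classical in
theorem exists_star {V : Type} [Fintype V] (G : SimpleGraph V) (s m t : ℕ) (hm : 64 ≤ m)
    (hs : m ^ 100 ≤ s) (ht : t ≤ s * m) (hTK : ¬ HasTK G t 1)
    (hn : s ^ 2 * m ^ 4000 ≤ Fintype.card V)
    (hdeg : ∀ v, s ^ 2 ≤ 2 * (Finset.univ.filter (fun w => G.Adj v w)).card)
    (Wf : Finset V) (hW : Wf.card ≤ s ^ 2 * m ^ 60) :
    ∃ S : Str V, ((∀ x ∈ S.L, G.Adj S.c x) ∧ S.L.card = s * m ^ 23) ∧ Disjoint S.vs Wf ∧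
      S.vs.card ≤ s * m ^ 24 := by
  obtain ⟨T, ⟨v, hv⟩, hTW, hTd⟩ := core_sub G s m t hm hs ht hTK hn hdeg Wf hW
  have h1 : 16 * (s * m ^ 23) ≤ s ^ 2 := by
    calc 16 * (s * m ^ 23) ≤ m * (s * m ^ 23) := by gcongr; omega
      _ = s * m ^ 24 := by ring
      _ ≤ s * m ^ 100 := by
        gcongr
        · omega
        · norm_num
      _ ≤ s * s := by gcongr
      _ = s ^ 2 := by ring
  have h2 : s * m ^ 23 + 1 ≤ s * m ^ 24 := by
    have : 1 ≤ s * m ^ 23 := Nat.mul_pos (lt_of_lt_of_le (by positivity) hs) (by positivity)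
    calc s * m ^ 23 + 1 ≤ 64 * (s * m ^ 23) := by omega
      _ ≤ m * (s * m ^ 23) := by gcongr
      _ = s * m ^ 24 := by ring
  obtain ⟨L, hL, hLc⟩ := Finset.exists_subset_card_eq (s := T.filter (fun w => G.Adj v w))
    (n := s * m ^ 23) (by have := hTd v hv; omega)
  refine ⟨⟨v, L⟩, ⟨fun x hx => (Finset.mem_filter.1 (hL hx)).2, hLc⟩, ?_, ?_⟩
  · refine Finset.disjoint_of_subset_left ?_ hTW
    intro x hx
    simp only [Str.vs, Finset.mem_insert] at hx
    rcases hx with rfl | hx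
    · exact hv
    · exact (Finset.mem_filter.1 (hL hx)).1
  · simp only [Str.vs]
    have := Finset.card_insert_le v L
    omega

open Classical in
/-- Choosing disjoint objects one after another. -/
theorem seq_choose {V α : Type} (vs : α → Finset V) (P : α → Prop) (s B : ℕ)
    (h : ∀ W : Finset V, W.card ≤ B → ∃ a, P a ∧ Disjoint (vs a) W ∧ (vs a).card ≤ s) :
    ∀ (N : ℕ) (W : Finset V), W.card + N * s ≤ B → ∃ f : Fin N → α, (∀ i, P (f i)) ∧
      (∀ i, Disjoint (vs (f i)) W) ∧ (∀ i, (vs (f i)).card ≤ s) ∧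
      ∀ i j, i ≠ j → Disjoint (vs (f i)) (vs (f j)) := by
  intro N
  induction N with
  | zero => intro W _; exact ⟨Fin.elim0, fun i => i.elim0, fun i => i.elim0, fun i => i.elim0,
      fun i => i.elim0⟩
  | succ N ih =>
    intro W hW
    obtain ⟨a, ha, had, hac⟩ := h W (by omega)
    obtain ⟨f, hf, hfd, hfc, hfp⟩ := ih (W ∪ vs a) (by
      have := Finset.card_union_le W (vs a)
      have : (N + 1) * s = N * s + s := by ring
      omega)
    refine ⟨Fin.cons a f, ?_, ?_, ?_, ?_⟩
    · intro i; refine Fin.cases ?_ ?_ i <;> simp [ha, hf]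
    · intro i; refine Fin.cases ?_ ?_ i
      · simpa using had
      · intro i; exact Finset.disjoint_of_subset_right Finset.subset_union_left (hfd i)
    · intro i; refine Fin.cases ?_ ?_ i <;> simp [hac, hfc]
    · intro i j
      refine Fin.cases ?_ ?_ i <;> refine Fin.cases ?_ ?_ j
      · intro h; exact absurd rfl h
      · intro j _; exact (Finset.disjoint_of_subset_right Finset.subset_union_right (hfd j)).symm
      · intro i _; exact (Finset.disjoint_of_subset_right Finset.subset_union_right (hfd i))
      · intro i j hij; exact hfp j i (fun h => hij (by rw [h]))


open Classical in
/-- The ball of radius `i` around `X` in `G - Z`. -/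
noncomputable def ballF {V : Type} [Fintype V] (G : SimpleGraph V) (X Z : Finset V) (i : ℕ) :
    Finset V :=
  Finset.univ.filter (fun w => ∃ x ∈ X, ∃ p : G.Walk x w, p.length ≤ i ∧ ∀ z ∈ p.support, z ∉ Z)

open Classical in
/-- The external neighbourhood as a finset. -/
noncomputable def extF {V : Type} [Fintype V] (G : SimpleGraph V) (X : Finset V) : Finset V :=
  Finset.univ.filter (fun w => w ∉ X ∧ ∃ v ∈ X, G.Adj v w)

open Classical in
theorem ball_big {V : Type} [Fintype V] (G : SimpleGraph V) (s m : ℕ) (ε : ℝ) (hs : 0 < s)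
    (hexp : ∀ X : Finset V, s ^ 2 ≤ X.card → 2 * X.card ≤ Fintype.card V →
      ε * X.card ≤ (extF G X).card)
    (hε : 1 ≤ ε * m) (hε0 : 0 < ε) (hgrow : (Fintype.card V : ℝ) ≤ s ^ 2 * (1 + ε / 2) ^ m)
    (X Z : Finset V) (hXs : s ^ 2 ≤ X.card) (hXZ : 2 * m * Z.card ≤ X.card) (hd : Disjoint X Z) :
    Fintype.card V < 2 * (ballF G X Z m).card := by
  have hsub : ∀ i, X ⊆ ballF G X Z i := by
    intro i x hx
    simp only [ballF, Finset.mem_filter, Finset.mem_univ, true_and]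
    refine ⟨x, hx, SimpleGraph.Walk.nil, by simp, ?_⟩
    simpa using Finset.disjoint_left.1 hd hx
  have hmono : ∀ i, ballF G X Z i ⊆ ballF G X Z (i + 1) := by
    intro i w hw
    simp only [ballF, Finset.mem_filter, Finset.mem_univ, true_and] at hw ⊢
    obtain ⟨x, hx, p, hp, hp'⟩ := hw
    exact ⟨x, hx, p, by omega, hp'⟩
  have hstep : ∀ i, ballF G X Z i ∪ (extF G (ballF G X Z i) \ Z) ⊆ ballF G X Z (i + 1) := by
    intro i w hw
    rcases Finset.mem_union.1 hw with hw | hw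
    · exact hmono i hw
    · rw [Finset.mem_sdiff] at hw
      obtain ⟨hw1, hw2⟩ := hw
      simp only [extF, Finset.mem_filter, Finset.mem_univ, true_and] at hw1
      obtain ⟨_, v, hv, hvw⟩ := hw1
      simp only [ballF, Finset.mem_filter, Finset.mem_univ, true_and] at hv ⊢
      obtain ⟨x, hx, p, hp, hp'⟩ := hv
      refine ⟨x, hx, p.concat hvw, by simpa using hp, ?_⟩
      intro z hz
      rw [SimpleGraph.Walk.support_concat] at hz
      simp at hz
      rcases hz with hz | rfl
      · exact hp' z hz
      · exact hw2
  have hX0 : (0 : ℝ) ≤ X.card := by positivity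
  have hZ : (Z.card : ℝ) ≤ ε / 2 * X.card := by
    have h1 : (2 * m * Z.card : ℝ) ≤ X.card := by exact_mod_cast hXZ
    have h2 : (Z.card : ℝ) * 1 ≤ Z.card * (ε * m) := by gcongr
    nlinarith
  have key : ∀ i, Fintype.card V < 2 * (ballF G X Z i).card ∨
      (X.card : ℝ) * (1 + ε / 2) ^ i ≤ (ballF G X Z i).card := by
    intro i
    induction i with
    | zero =>
      right
      simpa using Finset.card_le_card (hsub 0)
    | succ i ih =>
      by_cases hbig : Fintype.card V < 2 * (ballF G X Z i).card
      · left
        have := Finset.card_le_card (hmono i)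
        omega
      · right
        have ih := ih.resolve_left hbig
        have hXB : X.card ≤ (ballF G X Z i).card := Finset.card_le_card (hsub i)
        have h1 := hexp (ballF G X Z i) (by omega) (by omega)
        have h2 := Finset.card_le_card (hstep i)
        rw [Finset.card_union_of_disjoint] at h2
        · have h3 := Finset.le_card_sdiff Z (extF G (ballF G X Z i))
          have h4 : (ballF G X Z i).card + (extF G (ballF G X Z i)).card ≤
              (ballF G X Z (i + 1)).card + Z.card := by omega
          have h5 : ((ballF G X Z i).card : ℝ) + (extF G (ballF G X Z i)).card ≤
              (ballF G X Z (i + 1)).card + Z.card := by exact_mod_cast h4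
          have h6 : (X.card : ℝ) ≤ (ballF G X Z i).card := by exact_mod_cast hXB
          have h7 : ε / 2 * X.card ≤ ε / 2 * (ballF G X Z i).card := by gcongr
          calc (X.card : ℝ) * (1 + ε / 2) ^ (i + 1)
              = (X.card * (1 + ε / 2) ^ i) * (1 + ε / 2) := by ring
            _ ≤ (ballF G X Z i).card * (1 + ε / 2) := by gcongr
            _ ≤ _ := by linarith
        · refine Finset.disjoint_left.2 fun x hx hx' => ?_
          have := (Finset.mem_sdiff.1 hx').1
          simp only [extF, Finset.mem_filter] at this
          exact this.2.1 hx
  rcases key m with h | h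
  · exact h
  · have h1 : (s ^ 2 : ℝ) ≤ X.card := by exact_mod_cast hXs
    have h2 : (Fintype.card V : ℝ) ≤ (ballF G X Z m).card := by
      refine hgrow.trans (le_trans ?_ h); gcongr
    have h3 : Fintype.card V ≤ (ballF G X Z m).card := by exact_mod_cast h2
    have h4 : 0 < s ^ 2 := by positivity
    have h5 : X.card ≤ (ballF G X Z m).card := Finset.card_le_card (hsub m)
    omega

open Classical in
theorem connect {V : Type} [Fintype V] (G : SimpleGraph V) (s m : ℕ) (ε : ℝ) (hs : 0 < s)
    (hexp : ∀ X : Finset V, s ^ 2 ≤ X.card → 2 * X.card ≤ Fintype.card V →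
      ε * X.card ≤ (extF G X).card)
    (hε : 1 ≤ ε * m) (hε0 : 0 < ε) (hgrow : (Fintype.card V : ℝ) ≤ s ^ 2 * (1 + ε / 2) ^ m)
    (X Y Z : Finset V) (hXs : s ^ 2 ≤ X.card) (hXZ : 2 * m * Z.card ≤ X.card) (hd : Disjoint X Z)
    (hYs : s ^ 2 ≤ Y.card) (hYZ : 2 * m * Z.card ≤ Y.card) (hdY : Disjoint Y Z) :
    ∃ x ∈ X, ∃ y ∈ Y, ∃ p : G.Walk x y, p.IsPath ∧ p.length ≤ 2 * m ∧ ∀ z ∈ p.support, z ∉ Z := by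
  have h1 := ball_big G s m ε hs hexp hε hε0 hgrow X Z hXs hXZ hd
  have h2 := ball_big G s m ε hs hexp hε hε0 hgrow Y Z hYs hYZ hdY
  have h3 : ¬ Disjoint (ballF G X Z m) (ballF G Y Z m) := by
    intro hdis
    have := Finset.card_le_univ (ballF G X Z m ∪ ballF G Y Z m)
    rw [Finset.card_union_of_disjoint hdis] at this
    omega
  obtain ⟨w, hw1, hw2⟩ := Finset.not_disjoint_iff.1 h3
  simp only [ballF, Finset.mem_filter, Finset.mem_univ, true_and] at hw1 hw2
  obtain ⟨x, hx, p, hp, hp'⟩ := hw1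
  obtain ⟨y, hy, q, hq, hq'⟩ := hw2
  refine ⟨x, hx, y, hy, (p.append q.reverse).bypass, SimpleGraph.Walk.bypass_isPath _, ?_, ?_⟩
  · refine (SimpleGraph.Walk.length_bypass_le_length _).trans ?_
    simp; omega
  · intro z hz
    have := SimpleGraph.Walk.support_bypass_subset_support _ hz
    rw [SimpleGraph.Walk.mem_support_append_iff, SimpleGraph.Walk.support_reverse,
      List.mem_reverse] at this
    rcases this with h | h
    · exact hp' z h
    · have hfin := hq' z h
      exact hfin


/-- A link: a walk from a core to a centre. -/
structure Link {V ι κ : Type} (G : SimpleGraph V) (core : ι → V) (cen : κ → V) where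
  i : ι
  j : κ
  p : G.Walk (core i) (cen j)

open Classical in
/-- The interior vertices of a link. -/
noncomputable def Link.I {V ι κ : Type} {G : SimpleGraph V} {core : ι → V} {cen : κ → V}
    (l : Link G core cen) : Finset V :=
  (l.p.support.toFinset.erase (core l.i)).erase (cen l.j)

open Classical in
/-- A family of `k` disjoint links in which each core is used at most `T` times. -/
structure LFam {V ι κ : Type} (G : SimpleGraph V) (core : ι → V) (cen : κ → V) (Z0 : Finset V)
    (m T k : ℕ) (F : Fin k → Link G core cen) : Prop where
  path : ∀ x, (F x).p.IsPath
  len : ∀ x, (F x).p.length ≤ 2 * m + 2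
  avoid : ∀ x, Disjoint (F x).I Z0
  inj : Function.Injective fun x => (F x).j
  disj : ∀ x y, x ≠ y → Disjoint (F x).I (F y).I
  cnt : ∀ i, (Finset.univ.filter (fun x => (F x).i = i)).card ≤ T

open Classical in
theorem lfam_bound {V ι κ : Type} [Fintype ι] (G : SimpleGraph V) (core : ι → V) (cen : κ → V)
    (Z0 : Finset V) (m T k : ℕ) (F : Fin k → Link G core cen) (h : LFam G core cen Z0 m T k F) :
    k ≤ Fintype.card ι * T := by
  have h1 := Finset.card_eq_sum_card_fiberwise (s := (Finset.univ : Finset (Fin k)))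
    (t := (Finset.univ : Finset ι)) (f := fun x => (F x).i) (fun _ _ => by simp)
  rw [Finset.card_univ, Fintype.card_fin] at h1
  rw [h1]
  calc _ ≤ ∑ i : ι, T := Finset.sum_le_sum fun i _ => h.cnt i
    _ = _ := by simp

open Classical in
theorem lfam_extend {V ι κ : Type} [Fintype V] [Fintype ι] [Fintype κ] (G : SimpleGraph V)
    (s m : ℕ) (ε : ℝ) (hs : 0 < s)
    (hexp : ∀ X : Finset V, s ^ 2 ≤ X.card → 2 * X.card ≤ Fintype.card V →
      ε * X.card ≤ (extF G X).card)
    (hε : 1 ≤ ε * m) (hε0 : 0 < ε) (hgrow : (Fintype.card V : ℝ) ≤ s ^ 2 * (1 + ε / 2) ^ m)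
    (core : ι → V) (cen : κ → V) (Z0 : Finset V) (T k : ℕ)
    (LC : ι → Finset V) (LS : κ → Finset V) (D H N E ζ : ℕ)
    (hLC : ∀ i, ∀ x ∈ LC i, G.Adj (core i) x) (hLS : ∀ j, ∀ x ∈ LS j, G.Adj (cen j) x)
    (hLCd : ∀ i j, i ≠ j → Disjoint (LC i) (LC j)) (hLSd : ∀ i j, i ≠ j → Disjoint (LS i) (LS j))
    (hLCc : ∀ i, (LC i).card = D) (hLSc : ∀ j, (LS j).card = H)
    (hcoreZ : ∀ i, core i ∈ Z0) (hcenZ : ∀ j, cen j ∈ Z0) (hcc : ∀ i j, core i ≠ cen j)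
    (hζ : Z0.card + Fintype.card ι * T * (2 * m + 3) ≤ ζ) (hE1 : 2 * m * ζ ≤ E) (hE2 : s ^ 2 ≤ E)
    (hX : E + ζ ≤ N * D) (hY : E + ζ ≤ (Fintype.card κ - Fintype.card ι * T) * H)
    (F : Fin k → Link G core cen) (h : LFam G core cen Z0 m T k F)
    (hN : N ≤ (Finset.univ.filter (fun i : ι =>
      (Finset.univ.filter (fun x => (F x).i = i)).card < T)).card) :
    ∃ F' : Fin (k + 1) → Link G core cen, LFam G core cen Z0 m T (k + 1) F' := by
  have hk := lfam_bound G core cen Z0 m T k F h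
  set Un := Finset.univ.filter (fun i : ι =>
      (Finset.univ.filter (fun x => (F x).i = i)).card < T) with hUn
  let Z : Finset V := Z0 ∪ Finset.univ.biUnion (fun x => (F x).I)
  have hZc : Z.card ≤ ζ := by
    refine (Finset.card_union_le _ _).trans (le_trans ?_ hζ)
    gcongr
    refine Finset.card_biUnion_le.trans ?_
    calc ∑ x : Fin k, ((F x).I).card ≤ ∑ x : Fin k, (2 * m + 3) := by
          refine Finset.sum_le_sum fun x _ => ?_
          simp only [Link.I]
          refine (Finset.card_le_card ((Finset.erase_subset _ _).trans
            (Finset.erase_subset _ _))).trans ?_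
          refine (List.toFinset_card_le _).trans ?_
          rw [SimpleGraph.Walk.length_support]
          have := h.len x
          omega
      _ = k * (2 * m + 3) := by simp
      _ ≤ _ := by gcongr
  let X : Finset V := (Un.biUnion LC) \ Z
  let Free : Finset κ := Finset.univ \ (Finset.univ.image fun x => (F x).j)
  let Y : Finset V := (Free.biUnion LS) \ Z
  have hXc : E ≤ X.card := by
    have h1 := Finset.le_card_sdiff Z (Un.biUnion LC)
    have h2 : (Un.biUnion LC).card = Un.card * D := by
      rw [Finset.card_biUnion (fun i _ j _ hij => hLCd i j hij)]
      simp [hLCc]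
    have h3 : N * D ≤ Un.card * D := by gcongr
    simp only [X]; omega
  have hYc : E ≤ Y.card := by
    have h1 := Finset.le_card_sdiff Z (Free.biUnion LS)
    have h2 : (Free.biUnion LS).card = Free.card * H := by
      rw [Finset.card_biUnion (fun i _ j _ hij => hLSd i j hij)]
      simp [hLSc]
    have h4 : Fintype.card κ - Fintype.card ι * T ≤ Free.card := by
      have h5 := Finset.le_card_sdiff (Finset.univ.image fun x => (F x).j) (Finset.univ : Finset κ)
      have h6 : (Finset.univ.image fun x => (F x).j).card ≤ k := by
        refine Finset.card_image_le.trans ?_; simp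
      rw [Finset.card_univ] at h5
      simp only [Free]; omega
    have h3 : (Fintype.card κ - Fintype.card ι * T) * H ≤ Free.card * H := by gcongr
    simp only [Y]; omega
  have hZE : 2 * m * Z.card ≤ E := le_trans (by gcongr) hE1
  obtain ⟨x, hx, y, hy, p, hp, hpl, hpZ⟩ := connect G s m ε hs hexp hε hε0 hgrow X Y Z
    (hE2.trans hXc) (hZE.trans hXc) Finset.sdiff_disjoint (hE2.trans hYc) (hZE.trans hYc)
    Finset.sdiff_disjoint
  obtain ⟨i, hi, hxi⟩ := Finset.mem_biUnion.1 (Finset.mem_sdiff.1 hx).1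
  obtain ⟨j, hj, hyj⟩ := Finset.mem_biUnion.1 (Finset.mem_sdiff.1 hy).1
  have hiU := (Finset.mem_filter.1 hi).2
  have hjF : ∀ x, (F x).j ≠ j := by
    intro x hxj
    exact (Finset.mem_sdiff.1 hj).2 (Finset.mem_image.2 ⟨x, Finset.mem_univ _, hxj⟩)
  have hci : core i ∉ p.support := fun hh => hpZ _ hh (Finset.mem_union_left _ (hcoreZ i))
  have hcj : cen j ∉ p.support := fun hh => hpZ _ hh (Finset.mem_union_left _ (hcenZ j))
  let w : G.Walk (core i) (cen j) :=
    SimpleGraph.Walk.cons (hLC i x hxi) (p.concat (hLS j y hyj).symm)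
  have hwp : w.IsPath := by
    simp only [w, SimpleGraph.Walk.cons_isPath_iff]
    refine ⟨hp.concat hcj _, ?_⟩
    rw [SimpleGraph.Walk.support_concat]
    simp [hci, hcc]
  let l : Link G core cen := ⟨i, j, w⟩
  have hlI : ∀ z ∈ l.I, z ∈ p.support := by
    intro z hz
    simp only [Link.I, l, w, Finset.mem_erase, List.mem_toFinset, SimpleGraph.Walk.support_cons,
      SimpleGraph.Walk.support_concat, List.mem_cons, List.concat_eq_append,
      List.mem_append, List.not_mem_nil, or_false] at hz
    tauto
  have hlZ : Disjoint l.I Z := Finset.disjoint_left.2 fun z hz => hpZ z (hlI z hz)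
  have hlF : ∀ x, Disjoint l.I (F x).I := fun x =>
    Finset.disjoint_of_subset_right (fun z hz => Finset.mem_union_right _
      (Finset.mem_biUnion.2 ⟨x, Finset.mem_univ _, hz⟩)) hlZ
  refine ⟨Fin.cons l F, ?_, ?_, ?_, ?_, ?_, ?_⟩
  · intro x; refine Fin.cases ?_ ?_ x
    · exact hwp
    · exact h.path
  · intro x; refine Fin.cases ?_ ?_ x
    · change w.length ≤ _
      simp only [w, SimpleGraph.Walk.length_cons, SimpleGraph.Walk.length_concat]; omega
    · exact h.len
  · intro x; refine Fin.cases ?_ ?_ x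
    · exact Finset.disjoint_of_subset_right Finset.subset_union_left hlZ
    · exact h.avoid
  · intro x y
    refine Fin.cases ?_ ?_ x <;> refine Fin.cases ?_ ?_ y
    · intro _; rfl
    · intro y hxy; exact absurd hxy.symm (hjF y)
    · intro y hxy; exact absurd hxy (hjF y)
    · intro y x hxy; exact congrArg Fin.succ (h.inj hxy)
  · intro x y
    refine Fin.cases ?_ ?_ x <;> refine Fin.cases ?_ ?_ y
    · intro hh; exact absurd rfl hh
    · intro y _; exact hlF y
    · intro y _; exact (hlF y).symm
    · intro y x hxy; exact h.disj x y (fun hh => hxy (by rw [hh]))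
  · intro i'
    rw [Fin.card_filter_univ_succ]
    simp only [Fin.cons_zero, Fin.cons_succ]
    by_cases hh : l.i = i'
    · rw [if_pos hh]
      have : i = i' := hh
      subst this
      exact hiU
    · rw [if_neg hh]
      exact h.cnt i'

open Classical in
theorem lfam_max {V ι κ : Type} [Fintype V] [Fintype ι] [Fintype κ] (G : SimpleGraph V)
    (s m : ℕ) (ε : ℝ) (hs : 0 < s)
    (hexp : ∀ X : Finset V, s ^ 2 ≤ X.card → 2 * X.card ≤ Fintype.card V →
      ε * X.card ≤ (extF G X).card)
    (hε : 1 ≤ ε * m) (hε0 : 0 < ε) (hgrow : (Fintype.card V : ℝ) ≤ s ^ 2 * (1 + ε / 2) ^ m)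
    (core : ι → V) (cen : κ → V) (Z0 : Finset V) (T : ℕ)
    (LC : ι → Finset V) (LS : κ → Finset V) (D H N E ζ : ℕ)
    (hLC : ∀ i, ∀ x ∈ LC i, G.Adj (core i) x) (hLS : ∀ j, ∀ x ∈ LS j, G.Adj (cen j) x)
    (hLCd : ∀ i j, i ≠ j → Disjoint (LC i) (LC j)) (hLSd : ∀ i j, i ≠ j → Disjoint (LS i) (LS j))
    (hLCc : ∀ i, (LC i).card = D) (hLSc : ∀ j, (LS j).card = H)
    (hcoreZ : ∀ i, core i ∈ Z0) (hcenZ : ∀ j, cen j ∈ Z0) (hcc : ∀ i j, core i ≠ cen j)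
    (hζ : Z0.card + Fintype.card ι * T * (2 * m + 3) ≤ ζ) (hE1 : 2 * m * ζ ≤ E) (hE2 : s ^ 2 ≤ E)
    (hX : E + ζ ≤ N * D) (hY : E + ζ ≤ (Fintype.card κ - Fintype.card ι * T) * H) :
    ∃ (k : ℕ) (F : Fin k → Link G core cen), LFam G core cen Z0 m T k F ∧
      (Finset.univ.filter (fun i : ι =>
        (Finset.univ.filter (fun x => (F x).i = i)).card < T)).card < N := by
  by_contra hcon
  push Not at hcon
  have hall : ∀ k, ∃ F : Fin k → Link G core cen, LFam G core cen Z0 m T k F := by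
    intro k
    induction k with
    | zero =>
      refine ⟨Fin.elim0, fun x => x.elim0, fun x => x.elim0, fun x => x.elim0, fun x => x.elim0,
        fun x => x.elim0, fun i => by simp⟩
    | succ k ih =>
      obtain ⟨F, hF⟩ := ih
      exact lfam_extend G s m ε hs hexp hε hε0 hgrow core cen Z0 T k LC LS D H N E ζ hLC hLS hLCd
        hLSd hLCc hLSc hcoreZ hcenZ hcc hζ hE1 hE2 hX hY F hF (hcon k F hF)
  obtain ⟨F, hF⟩ := hall (Fintype.card ι * T + 1)
  have := lfam_bound G core cen Z0 m T _ F hF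
  omega


open Classical in
theorem link_mem {V ι κ : Type} {G : SimpleGraph V} {core : ι → V} {cen : κ → V}
    (l : Link G core cen) (x : V) (hx : x ∈ l.p.support) :
    x = core l.i ∨ x = cen l.j ∨ x ∈ l.I := by
  simp only [Link.I, Finset.mem_erase, List.mem_toFinset]
  tauto

open Classical in
theorem mk_unit {V ι κ : Type} [Fintype V] (G : SimpleGraph V) (core : ι → V) (cen : κ → V)
    (Z0 : Finset V) (m T k H h0 h1 : ℕ) (F : Fin k → Link G core cen)
    (hF : LFam G core cen Z0 m T k F) (LS : κ → Finset V)
    (hLS : ∀ j, ∀ x ∈ LS j, G.Adj (cen j) x)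
    (hLSd : ∀ i j, i ≠ j → Disjoint (LS i) (LS j)) (hLSc : ∀ j, (LS j).card = H)
    (hcoreZ : ∀ i, core i ∈ Z0) (hcenZ : ∀ j, cen j ∈ Z0) (hcc : ∀ i j, core i ≠ cen j)
    (hceni : Function.Injective cen) (hcenL : ∀ j j', cen j' ∉ LS j)
    (i0 : ι) (hcoreL : ∀ j, core i0 ∉ LS j) (hm : 1 ≤ m) (h00 : 0 < h0)
    (hT : (2 * m + 3) * h0 ≤ T) (hH : h1 + h0 * (2 * m + 3) ≤ H)
    (hsat : T ≤ (Finset.univ.filter (fun x => (F x).i = i0)).card) :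
    ∃ U : UnitIn G h0 h1 (10 * m), U.core = core i0 ∧
      (∀ x ∈ U.interior, ∃ y, (F y).i = i0 ∧ x ∈ (F y).p.support) ∧
      (∀ p q, ∃ j, U.leaf p q ∈ LS j) := by
  obtain ⟨ℓ, hℓ, hℓc⟩ := Finset.exists_le_card_fiber_of_mul_le_card_of_maps_to
    (s := Finset.univ.filter (fun x => (F x).i = i0)) (t := Finset.range (2 * m + 3))
    (f := fun x => (F x).p.length) (n := h0)
    (by intro x _; have := hF.len x; simp; omega)
    (by simp) (by rw [Finset.card_range]; omega)
  obtain ⟨S, hS, hSc⟩ := Finset.exists_subset_card_eq hℓc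
  let e : Fin h0 ≃ S := (finCongr hSc.symm).trans S.equivFin.symm
  have hei : ∀ a, (F (e a)).i = i0 := fun a => by
    have := hS (e a).2
    simp only [Finset.mem_filter] at this
    exact this.1.2
  have hel : ∀ a, (F (e a)).p.length = ℓ := fun a => by
    have := hS (e a).2
    simp only [Finset.mem_filter] at this
    exact this.2
  have hne : ∀ a b, a ≠ b → (e a : Fin k) ≠ e b := fun a b h h' => h (e.injective (Subtype.ext h'))
  let Uu : Finset V := Finset.univ.biUnion (fun a : Fin h0 => (F (e a)).I)
  have hUu : Uu.card ≤ h0 * (2 * m + 3) := by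
    refine Finset.card_biUnion_le.trans ?_
    calc ∑ a : Fin h0, ((F (e a)).I).card ≤ ∑ a : Fin h0, (2 * m + 3) := by
          refine Finset.sum_le_sum fun a _ => ?_
          simp only [Link.I]
          refine (Finset.card_le_card ((Finset.erase_subset _ _).trans
            (Finset.erase_subset _ _))).trans ?_
          refine (List.toFinset_card_le _).trans ?_
          rw [SimpleGraph.Walk.length_support]
          have := hF.len (e a)
          omega
      _ = _ := by simp
  have hleaf : ∀ a : Fin h0, ∃ f : Fin h1 → V, Function.Injective f ∧
      ∀ q, f q ∈ LS (F (e a)).j \ Uu := by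
    intro a
    have h1c : h1 ≤ (LS (F (e a)).j \ Uu).card := by
      have := Finset.le_card_sdiff Uu (LS (F (e a)).j)
      rw [hLSc] at this
      omega
    obtain ⟨S', hS', hSc'⟩ := Finset.exists_subset_card_eq h1c
    let e' : Fin h1 ≃ S' := (finCongr hSc'.symm).trans S'.equivFin.symm
    exact ⟨fun q => e' q, fun x y h => e'.injective (Subtype.ext h), fun q => hS' (e' q).2⟩
  choose lf hlfi hlfm using hleaf
  have hlf1 : ∀ a q, lf a q ∈ LS (F (e a)).j := fun a q => (Finset.mem_sdiff.1 (hlfm a q)).1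
  have hlf2 : ∀ a q, lf a q ∉ Uu := fun a q => (Finset.mem_sdiff.1 (hlfm a q)).2
  have hmem : ∀ a x, x ∈ (F (e a)).p.support → x = core i0 ∨ x = cen (F (e a)).j ∨
      x ∈ (F (e a)).I := by
    intro a x hx
    have := link_mem _ x hx
    rwa [hei a] at this
  have hIZ : ∀ y x, x ∈ (F y).I → x ∉ Z0 := fun y x hx hz =>
    Finset.disjoint_left.1 (hF.avoid y) hx hz
  refine ⟨{ core := core i0
            centre := fun a => cen (F (e a)).j
            leaf := lf
            path := fun a => (F (e a)).p.copy (congrArg core (hei a)) rfl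
            pathLen := ℓ
            pathLen_pos := ?_
            pathLen_lt := ?_
            path_isPath := ?_
            path_length := ?_
            star_adj := ?_
            centre_inj := ?_
            leaf_inj := ?_
            centre_ne_leaf := ?_
            paths_disjoint := ?_
            leaf_notin_path := ?_ }, rfl, ?_, ?_⟩
  · rcases Nat.eq_zero_or_pos ℓ with h | h
    · have h2 := hel ⟨0, h00⟩
      rw [h] at h2
      exact absurd (SimpleGraph.Walk.eq_of_length_eq_zero h2) (hcc _ _)
    · exact h
  · have := hF.len (e ⟨0, h00⟩)
    rw [hel] at this
    omega
  · intro a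
    rw [SimpleGraph.Walk.isPath_copy]
    exact hF.path _
  · intro a
    rw [SimpleGraph.Walk.length_copy]
    exact hel a
  · intro a q
    exact hLS _ _ (hlf1 a q)
  · intro a b h
    by_contra hab
    exact hne a b hab (hF.inj (hceni h))
  · rintro ⟨a, q⟩ ⟨b, r⟩ h
    simp only at h
    by_cases hab : a = b
    · subst hab
      rw [hlfi a h]
    · have hj : (F (e a)).j ≠ (F (e b)).j := fun hh => hne a b hab (hF.inj hh)
      have h3 := hlf1 b r
      rw [← h] at h3
      exact absurd h3 (Finset.disjoint_left.1 (hLSd _ _ hj) (hlf1 a q))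
  · intro a b q h
    exact hcenL _ _ (h ▸ hlf1 b q)
  · intro a b hab x hx hy
    rw [SimpleGraph.Walk.support_copy] at hx hy
    rcases hmem a x hx with h | h | h
    · exact h
    · rcases hmem b x hy with h' | h' | h'
      · exact h'
      · exact absurd (hF.inj (hceni (h.symm.trans h'))) (hne a b hab)
      · exact absurd (h ▸ hcenZ _) (hIZ _ _ h')
    · rcases hmem b x hy with h' | h' | h'
      · exact h'
      · exact absurd (h' ▸ hcenZ _) (hIZ _ _ h)
      · exact absurd h' (Finset.disjoint_left.1 (hF.disj _ _ (hne a b hab)) h)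
  · intro a b q hx
    rw [SimpleGraph.Walk.support_copy] at hx
    rcases hmem a _ hx with h | h | h
    · exact hcoreL _ (h ▸ hlf1 b q)
    · exact hcenL _ _ (h ▸ hlf1 b q)
    · exact hlf2 b q (Finset.mem_biUnion.2 ⟨a, Finset.mem_univ _, h⟩)
  · rintro x ⟨a, hx⟩
    simp only [SimpleGraph.Walk.support_copy] at hx
    exact ⟨e a, hei a, hx⟩
  · intro p q
    exact ⟨_, hlf1 p q⟩


theorem num8 (s m : ℕ) (hm : 64 ≤ m) (hs : m ^ 100 ≤ s) :
    m ^ 15 * (2 + 2 * m) + s * m ^ 25 + s ^ 2 * m ^ 11 + m ^ 15 * 2 * (s * m ^ 8) * (2 * m + 3)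
      ≤ s ^ 2 * m ^ 12 := by
  have h1 : m ^ 26 ≤ s := le_trans (Nat.pow_le_pow_right (by omega) (by norm_num)) hs
  have h0 : 1 ≤ s := le_trans (Nat.one_le_pow _ _ (by omega)) hs
  have a1 : m ^ 15 * (2 + 2 * m) ≤ s ^ 2 * m ^ 11 := by
    calc m ^ 15 * (2 + 2 * m) ≤ m ^ 15 * (m * m) := by gcongr; nlinarith
      _ = m ^ 17 := by ring
      _ ≤ m ^ 26 := Nat.pow_le_pow_right (by omega) (by norm_num)
      _ ≤ s := h1
      _ ≤ s * (s * m ^ 11) := Nat.le_mul_of_pos_right _ (by positivity)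
      _ = _ := by ring
  have a2 : s * m ^ 25 ≤ s ^ 2 * m ^ 11 := by
    calc s * m ^ 25 ≤ s * m ^ 26 := by gcongr <;> omega
      _ ≤ s * s := by gcongr
      _ ≤ s * s * m ^ 11 := Nat.le_mul_of_pos_right _ (by positivity)
      _ = _ := by ring
  have a3 : m ^ 15 * 2 * (s * m ^ 8) * (2 * m + 3) ≤ s ^ 2 * m ^ 11 := by
    calc m ^ 15 * 2 * (s * m ^ 8) * (2 * m + 3) = s * m ^ 23 * (4 * m + 6) := by ring
      _ ≤ s * m ^ 23 * (m * m * m) := by gcongr; nlinarith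
      _ = s * m ^ 26 := by ring
      _ ≤ s * s := by gcongr
      _ ≤ s * s * m ^ 11 := Nat.le_mul_of_pos_right _ (by positivity)
      _ = _ := by ring
  calc _ ≤ 4 * (s ^ 2 * m ^ 11) := by omega
    _ ≤ m * (s ^ 2 * m ^ 11) := by gcongr; omega
    _ = _ := by ring

theorem num9 (s m : ℕ) (hm : 64 ≤ m) (hs : m ^ 100 ≤ s) :
    2 * s ^ 2 * m ^ 13 + s ^ 2 * m ^ 12 ≤ m ^ 15 * (s ^ 2 / 64) := by
  have h0 : m ≤ s := le_trans (Nat.le_self_pow (by norm_num) _) hs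
  have h1 : s ^ 2 ≤ 128 * (s ^ 2 / 64) := by
    have : 64 ≤ s ^ 2 := by nlinarith
    omega
  calc 2 * s ^ 2 * m ^ 13 + s ^ 2 * m ^ 12 = s ^ 2 * (m ^ 12 * (2 * m + 1)) := by ring
    _ ≤ 128 * (s ^ 2 / 64) * (m ^ 12 * (2 * m + 1)) := by gcongr
    _ = (s ^ 2 / 64) * m ^ 12 * (128 * (2 * m + 1)) := by ring
    _ ≤ (s ^ 2 / 64) * m ^ 12 * m ^ 3 := by gcongr; nlinarith [mul_le_mul hm hm (by norm_num) (by omega)]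
    _ = _ := by ring

theorem num10 (s m : ℕ) (hm : 64 ≤ m) (hs : m ^ 100 ≤ s) :
    2 * s ^ 2 * m ^ 13 + s ^ 2 * m ^ 12 ≤ (s * m ^ 25 - m ^ 15 * 2 * (s * m ^ 8)) * (s * m ^ 23) := by
  have h1 : s * m ^ 24 ≤ s * m ^ 25 - m ^ 15 * 2 * (s * m ^ 8) := by
    apply Nat.le_sub_of_add_le
    calc s * m ^ 24 + m ^ 15 * 2 * (s * m ^ 8) = s * m ^ 23 * (m + 2) := by ring
      _ ≤ s * m ^ 23 * (m * m) := by gcongr; nlinarith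
      _ = _ := by ring
  calc 2 * s ^ 2 * m ^ 13 + s ^ 2 * m ^ 12 = s ^ 2 * m ^ 12 * (2 * m + 1) := by ring
    _ ≤ s ^ 2 * m ^ 12 * (m * m) := by gcongr; nlinarith
    _ = s ^ 2 * m ^ 14 := by ring
    _ ≤ s ^ 2 * m ^ 47 := by gcongr <;> omega
    _ = s * m ^ 24 * (s * m ^ 23) := by ring
    _ ≤ _ := by gcongr

theorem num11 (s m : ℕ) (hm : 64 ≤ m) :
    s ^ 2 * m ^ 11 + m ^ 15 * s ^ 2 + s * m ^ 25 * (s * m ^ 24) ≤ s ^ 2 * m ^ 60 := by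
  have a : s ^ 2 * m ^ 11 ≤ s ^ 2 * m ^ 49 := by gcongr <;> omega
  have b : m ^ 15 * s ^ 2 ≤ s ^ 2 * m ^ 49 := by
    rw [mul_comm]; gcongr <;> omega
  calc _ ≤ 3 * (s ^ 2 * m ^ 49) := by nlinarith
    _ ≤ m * (s ^ 2 * m ^ 49) := by gcongr; omega
    _ = s ^ 2 * m ^ 50 := by ring
    _ ≤ _ := by gcongr <;> omega

set_option maxHeartbeats 1000000 in
open Classical in
theorem core_thm {V : Type} [Fintype V] (G : SimpleGraph V) (s m t h0 h1 : ℕ) (ε : ℝ)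
    (hm : 64 ≤ m)
    (hs : m ^ 100 ≤ s) (ht : t ≤ s * m) (hTK : ¬ HasTK G t 1)
    (hn : s ^ 2 * m ^ 4000 ≤ Fintype.card V) (hn' : Fintype.card V < s ^ m)
    (hbip : IsBipartite G)
    (hdeg : ∀ v, s ^ 2 ≤ 2 * (Finset.univ.filter (fun w => G.Adj v w)).card)
    (hexp : ∀ X : Finset V, s ^ 2 ≤ X.card → 2 * X.card ≤ Fintype.card V →
      ε * X.card ≤ (extF G X).card)
    (hε : 1 ≤ ε * m) (hε0 : 0 < ε) (hgrow : (Fintype.card V : ℝ) ≤ s ^ 2 * (1 + ε / 2) ^ m)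
    (h00 : 0 < h0) (h0s : h0 ≤ 3 * s * m ^ 6) (h1s : h1 ≤ s * m ^ 22)
    (W : Finset V) (hW : W.card ≤ s ^ 2 * m ^ 11) :
    ∃ (g : Gad G) (F1 F2 : UnitIn G h0 h1 (10 * m)), g.Good m (s ^ 2 / 64) ∧ F1.core = g.a ∧
      F2.core = g.b ∧ F1.interior ∩ F2.interior = ∅ ∧ (∀ x ∈ F1.verts ∪ F2.verts, x ∉ W ∧ x ∉ g.A) ∧
      ∀ x ∈ g.A, x ∉ W := by
  have hn11 := num11 s m hm
  have hspos : 0 < s := lt_of_lt_of_le (by positivity) hs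
  set D := s ^ 2 / 64 with hD
  obtain ⟨g, hg, hgW, hgc, hgd⟩ := seq_choose (fun g : Gad G => g.vs) (fun g => g.Good m D) (s ^ 2)
    (s ^ 2 * m ^ 60) (fun W' hW' => exists_gad G s m t D hm hs ht hTK hn hn' hbip
      (by omega) hdeg W' hW') (m ^ 15) W (by omega)
  let W2 : Finset V := W ∪ Finset.univ.biUnion (fun i => (g i).vs)
  have hW2 : W2.card ≤ s ^ 2 * m ^ 11 + m ^ 15 * s ^ 2 := by
    refine (Finset.card_union_le _ _).trans (add_le_add hW ?_)
    refine Finset.card_biUnion_le.trans ?_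
    calc _ ≤ ∑ i : Fin (m ^ 15), s ^ 2 := Finset.sum_le_sum fun i _ => hgc i
      _ = _ := by simp
  obtain ⟨f, hf, hfW, hfc, hfd⟩ := seq_choose (fun S : Str V => S.vs)
    (fun S => (∀ x ∈ S.L, G.Adj S.c x) ∧ S.L.card = s * m ^ 23) (s * m ^ 24)
    (s ^ 2 * m ^ 60) (fun W' hW' => exists_star G s m t hm hs ht hTK hn hdeg W' hW') (s * m ^ 25) W2
      (by omega)
  let core : Fin (m ^ 15) × Bool → V := fun i => if i.2 then (g i.1).a else (g i.1).b
  let LC : Fin (m ^ 15) × Bool → Finset V := fun i => if i.2 then (g i.1).La else (g i.1).Lb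
  let cen : Fin (s * m ^ 25) → V := fun j => (f j).c
  let LS : Fin (s * m ^ 25) → Finset V := fun j => (f j).L
  let Z0 : Finset V := (Finset.univ.biUnion (fun i => insert (g i).a (insert (g i).b (g i).A)) ∪
    Finset.univ.image cen) ∪ W
  have hcore_vs : ∀ i, core i ∈ (g i.1).vs := by
    rintro ⟨i, _ | _⟩ <;> simp [core, Gad.vs]
  have hLC_vs : ∀ i, LC i ⊆ (g i.1).vs := by
    rintro ⟨i, _ | _⟩ x hx <;> simp only [LC, Gad.vs, Finset.mem_union] at hx ⊢ <;> simp at hx <;>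
      tauto
  have hcen_vs : ∀ j, cen j ∈ (f j).vs := fun j => by simp [cen, Str.vs]
  have hLS_vs : ∀ j, LS j ⊆ (f j).vs := fun j => Finset.subset_insert _ _
  have hgf : ∀ i j x, x ∈ (g i).vs → x ∉ (f j).vs := by
    intro i j x hx hx'
    refine Finset.disjoint_left.1 (hfW j) hx' (Finset.mem_union_right _ ?_)
    exact Finset.mem_biUnion.2 ⟨i, Finset.mem_univ _, hx⟩
  have hWf : ∀ j x, x ∈ (f j).vs → x ∉ W := by
    intro j x hx hx'
    exact Finset.disjoint_left.1 (hfW j) hx (Finset.mem_union_left _ hx')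
  have hgWd : ∀ i x, x ∈ (g i).vs → x ∉ W := fun i x hx => Finset.disjoint_left.1 (hgW i) hx
  have hZc : Z0.card ≤ m ^ 15 * (2 + 2 * m) + s * m ^ 25 + s ^ 2 * m ^ 11 := by
    refine (Finset.card_union_le _ _).trans (add_le_add ?_ hW)
    refine (Finset.card_union_le _ _).trans (add_le_add ?_ ?_)
    · refine Finset.card_biUnion_le.trans ?_
      calc _ ≤ ∑ i : Fin (m ^ 15), (2 + 2 * m) := Finset.sum_le_sum fun i _ => by
            have h1 := Finset.card_insert_le (g i).a (insert (g i).b (g i).A)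
            have h2 := Finset.card_insert_le (g i).b (g i).A
            have h3 := (hg i).cA
            have h4 := (hg i).lm
            omega
        _ = _ := by simp
    · refine Finset.card_image_le.trans ?_
      simp
  have hι : Fintype.card (Fin (m ^ 15) × Bool) = m ^ 15 * 2 := by simp
  have hκ : Fintype.card (Fin (s * m ^ 25)) = s * m ^ 25 := by simp
  have hn8 := num8 s m hm hs
  have hLC : ∀ i, ∀ x ∈ LC i, G.Adj (core i) x := by
    rintro ⟨i, _ | _⟩ x hx <;> simp [core, LC] at hx ⊢
    · exact (hg i).Lb_adj x hx
    · exact (hg i).La_adj x hx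
  have hLS : ∀ j, ∀ x ∈ LS j, G.Adj (cen j) x := fun j => (hf j).1
  have hLCd : ∀ i j, i ≠ j → Disjoint (LC i) (LC j) := by
    rintro ⟨i, x⟩ ⟨j, y⟩ hij
    by_cases h : i = j
    · subst h
      have hd := (hg i).Lab
      rcases x with _ | _ <;> rcases y with _ | _
      · exact absurd rfl hij
      · exact hd.symm
      · exact hd
      · exact absurd rfl hij
    · exact Finset.disjoint_of_subset_left (hLC_vs _)
        (Finset.disjoint_of_subset_right (hLC_vs _) (hgd i j h))
  have hLSd : ∀ i j, i ≠ j → Disjoint (LS i) (LS j) := fun i j h =>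
    Finset.disjoint_of_subset_left (hLS_vs _) (Finset.disjoint_of_subset_right (hLS_vs _) (hfd i j h))
  have hLCc : ∀ i, (LC i).card = D := by
    rintro ⟨i, _ | _⟩ <;> simp [LC]
    · exact (hg i).Lb_card
    · exact (hg i).La_card
  have hLSc : ∀ j, (LS j).card = s * m ^ 23 := fun j => (hf j).2
  have hcoreZ : ∀ i, core i ∈ Z0 := by
    rintro ⟨i, x⟩
    refine Finset.mem_union_left _ (Finset.mem_union_left _ ?_)
    refine Finset.mem_biUnion.2 ⟨i, Finset.mem_univ _, ?_⟩
    cases x <;> simp [core]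
  have hcenZ : ∀ j, cen j ∈ Z0 := fun j =>
    Finset.mem_union_left _ (Finset.mem_union_right _ (Finset.mem_image_of_mem _ (Finset.mem_univ _)))
  have hcc : ∀ i j, core i ≠ cen j := fun i j h => hgf _ j _ (hcore_vs i) (h ▸ hcen_vs j)
  obtain ⟨k, F, hF, hFN⟩ := lfam_max G s m ε hspos hexp hε hε0 hgrow core cen Z0 (s * m ^ 8) LC LS D
    (s * m ^ 23) (m ^ 15) (2 * s ^ 2 * m ^ 13) (s ^ 2 * m ^ 12) hLC hLS hLCd hLSd hLCc hLSc hcoreZ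
    hcenZ hcc (by rw [hι]; omega) (by apply le_of_eq; ring)
    (by
      calc s ^ 2 ≤ s ^ 2 * (2 * m ^ 13) := Nat.le_mul_of_pos_right _ (by positivity)
        _ = _ := by ring) (num9 s m hm hs) (by rw [hι, hκ]; exact num10 s m hm hs)
  have hex : ∃ i : Fin (m ^ 15), ∀ b : Bool,
      s * m ^ 8 ≤ (Finset.univ.filter (fun x => (F x).i = (i, b))).card := by
    by_contra hcon
    push Not at hcon
    choose b hb using hcon
    have : (Finset.univ.image (fun i : Fin (m ^ 15) => (i, b i))).card ≤ _ :=
      Finset.card_le_card (t := Finset.univ.filter (fun i : Fin (m ^ 15) × Bool =>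
        (Finset.univ.filter (fun x => (F x).i = i)).card < s * m ^ 8)) (by
        intro x hx
        obtain ⟨i, _, rfl⟩ := Finset.mem_image.1 hx
        exact Finset.mem_filter.2 ⟨Finset.mem_univ _, hb i⟩)
    rw [Finset.card_image_of_injective _ (fun x y h => (Prod.mk.inj h).1)] at this
    simp only [Finset.card_univ, Fintype.card_fin] at this
    refine absurd (lt_of_le_of_lt (this.trans (le_of_eq ?_)) hFN) (lt_irrefl _)
    congr!
  obtain ⟨i, hi⟩ := hex
  have hceni : Function.Injective cen := by
    intro x y h
    by_contra hxy
    exact Finset.disjoint_left.1 (hfd x y hxy) (hcen_vs x) (h ▸ hcen_vs y)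
  have hcenL : ∀ j j', cen j' ∉ LS j := by
    intro j j' h
    by_cases hj : j = j'
    · subst hj
      exact (hLS j _ h).ne rfl
    · exact Finset.disjoint_left.1 (hfd j j' hj) (hLS_vs j h) (hcen_vs j')
  have hcoreL : ∀ i j, core i ∉ LS j := fun i j h => hgf _ j _ (hcore_vs i) (hLS_vs j h)
  have hT : (2 * m + 3) * h0 ≤ s * m ^ 8 := by
    calc (2 * m + 3) * h0 ≤ (2 * m + 3) * (3 * s * m ^ 6) := by gcongr
      _ = s * m ^ 6 * (6 * m + 9) := by ring
      _ ≤ s * m ^ 6 * (m * m) := by gcongr; nlinarith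
      _ = _ := by ring
  have hH : h1 + h0 * (2 * m + 3) ≤ s * m ^ 23 := by
    calc h1 + h0 * (2 * m + 3) ≤ s * m ^ 22 + s * m ^ 8 := by
          rw [mul_comm h0]; omega
      _ ≤ s * m ^ 22 + s * m ^ 22 := by gcongr <;> omega
      _ = 2 * (s * m ^ 22) := by ring
      _ ≤ m * (s * m ^ 22) := by gcongr; omega
      _ = _ := by ring
  have mk := fun b => mk_unit G core cen Z0 m (s * m ^ 8) k (s * m ^ 23) h0 h1 F hF LS hLS hLSd hLSc
    hcoreZ hcenZ hcc hceni hcenL (i, b) (hcoreL _) (by omega) h00 hT hH (by convert hi b)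
  choose U hUc hUi hUl using mk
  have hgood := hg i
  have hAZ : ∀ x ∈ (g i).A, x ∈ Z0 := fun x hx =>
    Finset.mem_union_left _ (Finset.mem_union_left _ (Finset.mem_biUnion.2 ⟨i, Finset.mem_univ _,
      by simp [hx]⟩))
  have hAvs : ∀ x ∈ (g i).A, x ∈ (g i).vs := fun x hx => by simp [Gad.vs, hx]
  have hIZ : ∀ y x, x ∈ (F y).I → x ∉ Z0 := fun y x hx hz =>
    Finset.disjoint_left.1 (hF.avoid y) hx hz
  have hvert : ∀ b, ∀ x ∈ (U b).verts, x ∉ W ∧ x ∉ (g i).A := by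
    intro b x hx
    rcases hx with hx | ⟨⟨p, q⟩, rfl⟩
    · obtain ⟨y, hy, hxy⟩ := hUi b x hx
      rcases link_mem _ _ hxy with h | h | h
      · rw [hy] at h
        refine ⟨h ▸ hgWd _ _ (hcore_vs _), ?_⟩
        rw [h]
        cases b
        · exact hgood.hbA
        · exact hgood.haA
      · refine ⟨h ▸ hWf _ _ (hcen_vs _), fun hA => ?_⟩
        exact hgf i _ _ (hAvs _ hA) (h ▸ hcen_vs _)
      · exact ⟨fun hw => hIZ _ _ h (Finset.mem_union_right _ hw), fun hA => hIZ _ _ h (hAZ _ hA)⟩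
    · obtain ⟨j, hj⟩ := hUl b p q
      exact ⟨hWf _ _ (hLS_vs _ hj), fun hA => hgf i _ _ (hAvs _ hA) (hLS_vs _ hj)⟩
  refine ⟨g i, U true, U false, hgood, hUc true, hUc false, ?_, ?_, ?_⟩
  · rw [Set.eq_empty_iff_forall_notMem]
    rintro x ⟨hx, hx'⟩
    obtain ⟨y, hy, hxy⟩ := hUi _ x hx
    obtain ⟨y', hy', hxy'⟩ := hUi _ x hx'
    have hyy : y ≠ y' := by
      rintro rfl
      rw [hy] at hy'
      simp at hy'
    rcases link_mem _ _ hxy with h | h | h <;> rcases link_mem _ _ hxy' with h' | h' | h'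
    · rw [hy] at h
      rw [hy'] at h'
      exact hgood.hab (h.symm.trans h')
    · exact hcc _ _ (h.symm.trans h')
    · exact hIZ _ _ h' (h ▸ hcoreZ _)
    · exact hcc _ _ (h'.symm.trans h)
    · exact hyy (hF.inj (hceni (h.symm.trans h')))
    · exact hIZ _ _ h' (h ▸ hcenZ _)
    · exact hIZ _ _ h (h' ▸ hcoreZ _)
    · exact hIZ _ _ h (h' ▸ hcenZ _)
    · exact Finset.disjoint_left.1 (hF.disj _ _ hyy) h h'
  · rintro x (hx | hx)
    · exact hvert _ x hx
    · exact hvert _ x hx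
  · exact fun x hx => hgWd _ _ (hAvs x hx)


theorem exp_half_le (x : ℝ) (h0 : 0 ≤ x) (h1 : x ≤ 1) : Real.exp (x / 2) ≤ 1 + x := by
  have h2 : 1 - x / 2 ≤ Real.exp (-(x / 2)) := by
    have := Real.add_one_le_exp (-(x / 2)); linarith
  have h3 : Real.exp (x / 2) * Real.exp (-(x / 2)) = 1 := by
    rw [← Real.exp_add]; simp
  have h4 : Real.exp (x / 2) * (1 - x / 2) ≤ 1 := by
    calc _ ≤ Real.exp (x / 2) * Real.exp (-(x / 2)) := by gcongr
      _ = 1 := h3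
  have h5 : 1 ≤ (1 + x) * (1 - x / 2) := by nlinarith
  exact le_of_mul_le_mul_right (h4.trans h5) (by linarith)

theorem exists_L0 (eps1 eps2 : ℝ) :
    ∃ L0 : ℝ, ∀ L : ℝ, L0 ≤ L → 64 ≤ L ∧ 64 / eps1 ≤ L ∧ 8 / eps2 ≤ L ∧
      2 * L ^ 16000 ≤ Real.exp L := by
  have h := (Real.tendsto_exp_div_pow_atTop 16000).eventually_ge_atTop 2
  have h2 := (Filter.eventually_ge_atTop (64 : ℝ)).and ((Filter.eventually_ge_atTop (64 / eps1)).and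
    ((Filter.eventually_ge_atTop (8 / eps2)).and h))
  obtain ⟨L0, hL⟩ := Filter.eventually_atTop.1 h2
  refine ⟨L0, fun L hh => ?_⟩
  obtain ⟨a, b, c, e⟩ := hL L hh
  refine ⟨a, b, c, ?_⟩
  rwa [le_div_iff₀ (pow_pos (by linarith) _)] at e

open Classical in
theorem expander_ext {V : Type} [Fintype V] (G : SimpleGraph V) (eps1 eps2 d L : ℝ) (s : ℕ)
    (heps1 : 0 < eps1) (heps2 : 0 < eps2) (heps2' : eps2 < 1) (hd : 0 < d)
    (hG : IsExpander G eps1 (eps2 * d)) (hnL : (Fintype.card V : ℝ) = d * Real.exp L)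
    (hL : 8 / eps2 ≤ L) (hs : d ≤ (s : ℝ) ^ 2)
    (X : Finset V) (hX : s ^ 2 ≤ X.card) (hX2 : 2 * X.card ≤ Fintype.card V) :
    eps1 / (4 * L ^ 2) * X.card ≤ (extF G X).card := by
  have hXr : d ≤ (X.card : ℝ) := hs.trans (by exact_mod_cast hX)
  have hX2r : 2 * (X.card : ℝ) ≤ d * Real.exp L := by rw [← hnL]; exact_mod_cast hX2
  have hL0 : 0 < L := lt_of_lt_of_le (by positivity) hL
  have hk : eps2 * d ≤ d := by nlinarith
  have hkp : 0 < eps2 * d := by positivity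
  have heps : eps1 / (4 * L ^ 2) ≤ epsFun eps1 (eps2 * d) X.card := by
    unfold epsFun
    rw [if_neg (by linarith)]
    have h15 : 1 < 15 * (X.card : ℝ) / (eps2 * d) := by
      rw [lt_div_iff₀ hkp]; linarith
    have hlogpos := Real.log_pos h15
    have hle : Real.log (15 * (X.card : ℝ) / (eps2 * d)) ≤ 2 * L := by
      rw [Real.log_le_iff_le_exp (by linarith), div_le_iff₀ hkp]
      have e1 : 8 ≤ Real.exp L * eps2 := by
        have := Real.add_one_le_exp L
        rw [div_le_iff₀ heps2] at hL
        nlinarith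
      have e2 : Real.exp (2 * L) = Real.exp L * Real.exp L := by rw [← Real.exp_add]; ring_nf
      rw [e2]
      have e3 : 8 * (d * Real.exp L) ≤ (Real.exp L * eps2) * (d * Real.exp L) := by gcongr
      nlinarith [Real.exp_pos L]
    gcongr
    nlinarith
  have hx0 : (0 : ℝ) ≤ X.card := by positivity
  have hepos : 0 ≤ epsFun eps1 (eps2 * d) X.card := le_trans (by positivity) heps
  have hav : 0 ≤ avgDeg G := by
    unfold avgDeg
    exact div_nonneg (finsum_nonneg fun v => by positivity) (by positivity)
  have h := hG (X : Set V) (by rw [Set.ncard_coe_finset]; linarith)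
    (by rw [Set.ncard_coe_finset, Nat.card_eq_fintype_card, hnL]; linarith) ⊥ bot_le
    (by rw [Set.ncard_coe_finset]; simp; positivity)
  rw [Set.ncard_coe_finset] at h
  have hE : (extNbr (G \ ⊥) (X : Set V)) = ((extF G X : Finset V) : Set V) := by
    ext w
    simp [extNbr, extF]
  rw [hE, Set.ncard_coe_finset] at h
  exact le_trans (by gcongr) h

theorem statement_13 (eps1 eps2 : Real)
    (heps1 : 0 < eps1) (heps1' : eps1 < 1) (heps2 : 0 < eps2) (heps2' : eps2 < 1) :
    ∃ K₀ : Real, ∀ K : Real, K₀ ≤ K →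
      ∀ (V : Type) [Fintype V] (G : SimpleGraph V) (n : Nat) (d : Real) (m : Nat),
        Nat.card V = n → 0 < d → IsBipartite G → IsExpander G eps1 (eps2 * d) →
        minDegGe G d → K * d ≤ (n : Real) → m = ⌊Real.log ((n : Real) / d) ^ 4⌋₊ →
        (m : Real) ^ 200 ≤ d →
        ¬ HasTK G ⌈Real.sqrt d * (m : Real)⌉₊ 1 →
        ∀ W : Set V, (W.ncard : Real) ≤ d * (m : Real) ^ 11 →
        ∃ P : AdjusterIn G d m (50 * m) 1,
          P.z = 3 ∧ (∀ x ∈ P.verts, x ∉ W) ∧ P.A.ncard ≤ 2 * P.len := by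
  classical
  obtain ⟨L0, hL0⟩ := exists_L0 eps1 eps2
  refine ⟨Real.exp L0, ?_⟩
  intro K hK V _ G n d m hcard hd hbip hG hdeg hn hm hmd hTK W hW
  have hnd : Real.exp L0 ≤ (n : ℝ) / d := by
    rw [le_div_iff₀ hd]
    exact le_trans (by gcongr) hn
  have hndpos : 0 < (n : ℝ) / d := lt_of_lt_of_le (Real.exp_pos _) hnd
  set L := Real.log ((n : ℝ) / d) with hLdef
  have hLL : L0 ≤ L := (Real.le_log_iff_exp_le hndpos).2 hnd
  obtain ⟨hL64, hLe1, hLe2, hLexp⟩ := hL0 L hLL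
  have hnL : (n : ℝ) = d * Real.exp L := by
    rw [hLdef, Real.exp_log hndpos]; field_simp
  rw [Nat.card_eq_fintype_card] at hcard
  have hcardL : (Fintype.card V : ℝ) = d * Real.exp L := by rw [hcard, hnL]
  have hL4 : (64 : ℝ) ^ 3 * L ≤ L ^ 4 := by
    have : (64 : ℝ) ^ 3 ≤ L ^ 3 := by gcongr
    calc (64 : ℝ) ^ 3 * L ≤ L ^ 3 * L := by gcongr
      _ = _ := by ring
  have hmle : (m : ℝ) ≤ L ^ 4 := by rw [hm]; exact Nat.floor_le (by positivity)
  have hmlt : L ^ 4 < m + 1 := by rw [hm]; exact Nat.lt_floor_add_one _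
  have hmL : 2 * L + 3 ≤ (m : ℝ) := by linarith
  have hm64 : 64 ≤ m := by
    have : (64 : ℝ) ≤ m := by linarith
    exact_mod_cast this
  have hm1 : (1 : ℝ) ≤ m := by linarith
  have hsd : (m : ℝ) ^ 100 ≤ Real.sqrt d := by
    apply Real.le_sqrt_of_sq_le
    rw [← pow_mul]; exact hmd
  set s := ⌈Real.sqrt d⌉₊ with hs
  have hs1 : Real.sqrt d ≤ s := Nat.le_ceil _
  have hs2 : (s : ℝ) < Real.sqrt d + 1 := Nat.ceil_lt_add_one (Real.sqrt_nonneg _)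
  have hsq : Real.sqrt d ^ 2 = d := Real.sq_sqrt hd.le
  have hsqd : (64 : ℝ) ≤ Real.sqrt d := by
    refine le_trans ?_ hsd
    calc (64 : ℝ) ≤ m := by exact_mod_cast hm64
      _ ≤ (m : ℝ) ^ 100 := le_self_pow₀ hm1 (by norm_num)
  have hds : d ≤ (s : ℝ) ^ 2 := by rw [← hsq]; gcongr
  have hsd2 : (s : ℝ) ^ 2 ≤ 2 * d := by nlinarith
  have hms : m ^ 100 ≤ s := by
    have : (m : ℝ) ^ 100 ≤ s := hsd.trans hs1
    exact_mod_cast this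
  have hmpos : (0 : ℝ) < m := by linarith
  set ε := eps1 / (4 * L ^ 2) with hεdef
  have hLpos : 0 < L := by linarith
  have hε0 : 0 < ε := by positivity
  have he1L : 64 ≤ L * eps1 := by rwa [div_le_iff₀ heps1] at hLe1
  have hεm4 : 4 * L ≤ ε * m := by
    have h1 : L ^ 4 / 2 ≤ m := by linarith
    calc 4 * L ≤ (L * eps1) * L / 8 := by nlinarith
      _ = ε * (L ^ 4 / 2) := by rw [hεdef]; field_simp; ring
      _ ≤ ε * m := by gcongr
  have hε1 : ε ≤ 1 := by
    rw [hεdef, div_le_one (by positivity)]; nlinarith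
  have hgrow : (Fintype.card V : ℝ) ≤ (s : ℝ) ^ 2 * (1 + ε / 2) ^ m := by
    rw [hcardL]
    have h1 : Real.exp L ≤ (1 + ε / 2) ^ m := by
      calc Real.exp L ≤ Real.exp (m * (ε / 2 / 2)) := by
            apply Real.exp_le_exp.2; linarith
        _ = Real.exp (ε / 2 / 2) ^ m := Real.exp_nat_mul _ _
        _ ≤ _ := by
          gcongr
          exact exp_half_le _ (by linarith) (by linarith)
    gcongr
  have hncard : s ^ 2 * m ^ 4000 ≤ Fintype.card V := by
    have : (s : ℝ) ^ 2 * (m : ℝ) ^ 4000 ≤ (Fintype.card V : ℝ) := by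
      rw [hcardL]
      calc (s : ℝ) ^ 2 * (m : ℝ) ^ 4000 ≤ (2 * d) * (L ^ 4) ^ 4000 := by gcongr
        _ = d * (2 * L ^ 16000) := by rw [← pow_mul]; ring
        _ ≤ _ := by gcongr
    exact_mod_cast this
  have hncard' : Fintype.card V < s ^ m := by
    have : (Fintype.card V : ℝ) < (s : ℝ) ^ m := by
      rw [hcardL]
      have h3 : Real.exp 1 ≤ s := by
        have := Real.exp_one_lt_d9
        linarith
      calc d * Real.exp L ≤ (s : ℝ) ^ 2 * Real.exp L := by gcongr
        _ < (s : ℝ) ^ 2 * Real.exp ((m - 2 : ℕ) * 1) := by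
          have : (0 : ℝ) < s := by linarith
          gcongr
          rw [Nat.cast_sub (by omega)]
          push_cast
          linarith
        _ = (s : ℝ) ^ 2 * Real.exp 1 ^ (m - 2) := by rw [Real.exp_nat_mul]
        _ ≤ (s : ℝ) ^ 2 * (s : ℝ) ^ (m - 2) := by gcongr
        _ = (s : ℝ) ^ m := by rw [← pow_add]; congr 1; omega
    exact_mod_cast this
  have hdeg' : ∀ v, s ^ 2 ≤ 2 * (Finset.univ.filter (fun w => G.Adj v w)).card := by
    intro v
    have h1 := hdeg v
    have h2 : G.neighborSet v = ((Finset.univ.filter (fun w => G.Adj v w) : Finset V) : Set V) := by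
      ext w; simp
    rw [h2, Set.ncard_coe_finset] at h1
    have : (s : ℝ) ^ 2 ≤ 2 * ((Finset.univ.filter (fun w => G.Adj v w)).card : ℝ) := by linarith
    exact_mod_cast this
  have ht : ⌈Real.sqrt d * (m : ℝ)⌉₊ ≤ s * m := by
    apply Nat.ceil_le.2; push_cast; gcongr
  have hh0 : ⌈3 * Real.sqrt d * (m : ℝ) ^ 6⌉₊ ≤ 3 * s * m ^ 6 := by
    apply Nat.ceil_le.2; push_cast; gcongr
  have hh1 : ⌈Real.sqrt d * (m : ℝ) ^ 22⌉₊ ≤ s * m ^ 22 := by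
    apply Nat.ceil_le.2; push_cast; gcongr
  have hh00 : 0 < ⌈3 * Real.sqrt d * (m : ℝ) ^ 6⌉₊ := by
    apply Nat.ceil_pos.2
    have : 0 < Real.sqrt d := by linarith
    positivity
  have hWc : W.toFinset.card ≤ s ^ 2 * m ^ 11 := by
    rw [← Set.ncard_eq_toFinset_card']
    have : (W.ncard : ℝ) ≤ (s : ℝ) ^ 2 * (m : ℝ) ^ 11 := hW.trans (by gcongr)
    exact_mod_cast this
  obtain ⟨g, F1, F2, hg, h1, h2, hintd, hv, hA⟩ := core_thm G s m _ _ _ ε hm64 hms ht hTK hncard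
    hncard' hbip (fun v => by convert hdeg' v) (fun X hX hX2 => by
      convert expander_ext G eps1 eps2 d L s heps1 heps2 heps2' hd hG hcardL hLe2 hds X hX hX2)
    (by linarith) hε0 hgrow hh00 hh0 hh1 W.toFinset hWc
  refine ⟨{ z := 3
            z_ge := by norm_num
            z_le := le_rfl
            F₁ := F1
            F₂ := F2
            int_disj := hintd
            A := (g.A : Set V)
            A_card := ?_
            A_disj := ?_
            l' := g.l'
            l'_le := ?_
            paths := fun i => if i = 0 then g.w0.copy h1.symm h2.symm else g.w1.copy h1.symm h2.symm
            paths_isPath := ?_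
            paths_length := ?_
            paths_support := ?_ }, rfl, ?_, ?_⟩
  · rw [Set.ncard_coe_finset]
    have := hg.cA
    have := hg.lm
    omega
  · rw [Set.eq_empty_iff_forall_notMem]
    rintro x ⟨hx, hx'⟩
    exact (hv x hx').2 hx
  · have := hg.lm
    omega
  · intro i
    split_ifs
    · rw [SimpleGraph.Walk.isPath_copy]; exact hg.p0
    · rw [SimpleGraph.Walk.isPath_copy]; exact hg.p1
  · intro i
    split_ifs with h
    · rw [SimpleGraph.Walk.length_copy, hg.l0, h]; simp
    · rw [SimpleGraph.Walk.length_copy, hg.l1]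
      have : i = 1 := by
        fin_cases i
        · exact absurd rfl h
        · rfl
      rw [this]; simp
  · intro i x hx
    rw [h1, h2]
    split_ifs at hx
    · rw [SimpleGraph.Walk.support_copy] at hx
      have hh := hg.s0 x hx
      simp only [Set.mem_union, Finset.mem_coe, Set.mem_insert_iff, Set.mem_singleton_iff]
      exact hh
    · rw [SimpleGraph.Walk.support_copy] at hx
      have hh := hg.s1 x hx
      simp only [Set.mem_union, Finset.mem_coe, Set.mem_insert_iff, Set.mem_singleton_iff]
      exact hh
  · intro x hx hxW
    have hxW' : x ∈ W.toFinset := by simpa using hxW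
    rcases hx with (hx | hx) | hx
    · exact hA x hx hxW'
    · exact (hv x (Or.inl hx)).1 hxW'
    · exact (hv x (Or.inr hx)).1 hxW'
  · simp only [AdjusterIn.len]
    rw [Set.ncard_coe_finset]
    have := hg.cA
    omega
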